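/- arXiv:2011.13977 — 4 statements merged into one kernel-verified Lean document; each statement's English description precedes it below -/
import Mathlib

section
/- Let I be an instance with n ≥ 2 agents and n objects, let p = (p_1,...,p_n) be one of the three priority vectors in 𝕡, and let v be a valuation profile consistent with I. Assign to each edge e = (a_i, h_j) of G_I of rank r the weight w_e = p_r + v_i(h_j). Then every maximum-weight matching μ of G_I with respect to the weights (w_e) is a priority-p matching, and moreover SW(μ | v) ≥ SW(μ' | v) for every priority-p matching μ'; i.e., μ is a welfare-optimal priority-p matching. -/
open Finset
open scoped Classical

/-- A one-sided matching instance with `n` agents and `n` objects.  Agent `i` has a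
nonempty acceptable set `accept i` and a weak order `pref i` on it
(`pref i h h'` means agent `i` weakly prefers object `h` to object `h'`). -/
structure OSMInstance (n : ℕ) where
  accept : Fin n → Finset (Fin n)
  accept_nonempty : ∀ i, (accept i).Nonempty
  pref : Fin n → Fin n → Fin n → Prop
  pref_refl : ∀ i h, h ∈ accept i → pref i h h
  pref_trans : ∀ i h₁ h₂ h₃, h₁ ∈ accept i → h₂ ∈ accept i → h₃ ∈ accept i →
    pref i h₁ h₂ → pref i h₂ h₃ → pref i h₁ h₃
  pref_total : ∀ i h₁ h₂, h₁ ∈ accept i → h₂ ∈ accept i → pref i h₁ h₂ ∨ pref i h₂ h₁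

namespace OSMInstance

variable {n : ℕ}

/-- Agent `i` strictly prefers object `h` to object `h'`. -/
def strictPref (I : OSMInstance n) (i h h' : Fin n) : Prop :=
  I.pref i h h' ∧ ¬ I.pref i h' h

/-- The rank of the edge `(i, h)` of `G_I`: one plus the number of acceptable objects
that agent `i` strictly prefers to `h`. -/
noncomputable def edgeRank (I : OSMInstance n) (e : Fin n × Fin n) : ℕ :=
  ((I.accept e.1).filter (fun h' => I.strictPref e.1 h' e.2)).card + 1

/-- A matching of `G_I`: a set of acceptable (agent, object) pairs in which every agent
and every object occurs at most once. -/
def IsMatching (I : OSMInstance n) (μ : Finset (Fin n × Fin n)) : Prop :=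
  (∀ e ∈ μ, e.2 ∈ I.accept e.1) ∧
  (∀ e ∈ μ, ∀ e' ∈ μ, e.1 = e'.1 → e = e') ∧
  (∀ e ∈ μ, ∀ e' ∈ μ, e.2 = e'.2 → e = e')

/-- Total weight of a set of edges under the edge weights `w`. -/
def weightSum (w : Fin n × Fin n → ℝ) (μ : Finset (Fin n × Fin n)) : ℝ :=
  ∑ e ∈ μ, w e

/-- Social welfare of the set of edges `μ` under the valuation profile `v`. -/
def SW (_I : OSMInstance n) (v : Fin n → Fin n → ℝ) (μ : Finset (Fin n × Fin n)) : ℝ :=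
  ∑ e ∈ μ, v e.1 e.2

/-- `μ` is a maximum-weight matching of `G_I` with respect to edge weights `w`. -/
def IsMaxWeightMatching (I : OSMInstance n) (w : Fin n × Fin n → ℝ)
    (μ : Finset (Fin n × Fin n)) : Prop :=
  I.IsMatching μ ∧ ∀ μ', I.IsMatching μ' → weightSum w μ' ≤ weightSum w μ

/-- `μ` is a priority-`p` matching: a maximum-weight matching when every rank-`r` edge
gets weight `p r`. -/
noncomputable def IsPriorityMatching (I : OSMInstance n) (p : ℕ → ℝ)
    (μ : Finset (Fin n × Fin n)) : Prop :=
  I.IsMaxWeightMatching (fun e => p (I.edgeRank e)) μ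

/-- `v` is a valuation profile consistent with the instance: values lie in `[0,1]`,
unacceptable objects have value `0`, and on acceptable objects the values represent
the weak order. -/
def Consistent (I : OSMInstance n) (v : Fin n → Fin n → ℝ) : Prop :=
  (∀ i h, 0 ≤ v i h ∧ v i h ≤ 1) ∧
  (∀ i h, h ∉ I.accept i → v i h = 0) ∧
  (∀ i h h', h ∈ I.accept i → h' ∈ I.accept i → (I.pref i h h' ↔ v i h' ≤ v i h))

/-- Unit-sum valuations: each agent's values over acceptable objects sum to `1`. -/
def UnitSum (I : OSMInstance n) (v : Fin n → Fin n → ℝ) : Prop :=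
  ∀ i, ∑ h ∈ I.accept i, v i h = 1

/-- Unit-range valuations: each agent values some acceptable object `1`, some
acceptable object `0`, and has two non-equivalent acceptable objects. -/
def UnitRange (I : OSMInstance n) (v : Fin n → Fin n → ℝ) : Prop :=
  ∀ i, (∃ h ∈ I.accept i, v i h = 1) ∧ (∃ h ∈ I.accept i, v i h = 0) ∧
    ∃ h ∈ I.accept i, ∃ h' ∈ I.accept i, I.strictPref i h h'

/-- Agent `i` is unmatched in `μ`. -/
def Unmatched (_I : OSMInstance n) (μ : Finset (Fin n × Fin n)) (i : Fin n) : Prop :=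
  ∀ h, (i, h) ∉ μ

/-- Agent `i` weakly prefers their allocation in `μ'` to their allocation in `μ`
(being unmatched is strictly worse than receiving any acceptable object). -/
def WeakImprove (I : OSMInstance n) (μ' μ : Finset (Fin n × Fin n)) (i : Fin n) : Prop :=
  I.Unmatched μ i ∨ ∃ h h', (i, h) ∈ μ ∧ (i, h') ∈ μ' ∧ I.pref i h' h

/-- Agent `i` strictly prefers their allocation in `μ'` to their allocation in `μ`. -/
def StrictImprove (I : OSMInstance n) (μ' μ : Finset (Fin n × Fin n)) (i : Fin n) : Prop :=
  (I.Unmatched μ i ∧ ∃ h', (i, h') ∈ μ') ∨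
    ∃ h h', (i, h) ∈ μ ∧ (i, h') ∈ μ' ∧ I.strictPref i h' h

/-- `μ` is a Pareto optimal matching of `G_I`. -/
def ParetoOptimal (I : OSMInstance n) (μ : Finset (Fin n × Fin n)) : Prop :=
  I.IsMatching μ ∧
    ¬ ∃ μ', I.IsMatching μ' ∧ (∀ i, I.WeakImprove μ' μ i) ∧ ∃ i, I.StrictImprove μ' μ i

/-- `sig I μ r` is the number of rank-`r` edges of `μ` (as an integer). -/
noncomputable def sig (I : OSMInstance n) (μ : Finset (Fin n × Fin n)) (r : ℕ) : ℤ :=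
  ((μ.filter (fun e => I.edgeRank e = r)).card : ℤ)

end OSMInstance

/-- Lexicographic comparison `f ≤ g` of the length-`len` tuples `(f 0, …, f (len-1))`
and `(g 0, …, g (len-1))`. -/
def LexLe (len : ℕ) (f g : ℕ → ℤ) : Prop :=
  (∀ j < len, f j = g j) ∨ ∃ j < len, (∀ i < j, f i = g i) ∧ f j < g j

namespace OSMInstance

variable {n : ℕ}

/-- `μ` is a rank-maximal matching: it lexicographically maximizes `(s_1, …, s_n)`. -/
noncomputable def RankMaximal (I : OSMInstance n) (μ : Finset (Fin n × Fin n)) : Prop :=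
  I.IsMatching μ ∧ ∀ μ', I.IsMatching μ' →
    LexLe n (fun j => I.sig μ' (j + 1)) (fun j => I.sig μ (j + 1))

/-- `μ` is a max-cardinality rank-maximal matching: it lexicographically maximizes
`(Σ_i s_i, s_1, …, s_n)`. -/
noncomputable def MaxCardRankMaximal (I : OSMInstance n) (μ : Finset (Fin n × Fin n)) : Prop :=
  I.IsMatching μ ∧ ∀ μ', I.IsMatching μ' →
    LexLe (n + 1) (fun j => if j = 0 then (μ'.card : ℤ) else I.sig μ' j)
      (fun j => if j = 0 then (μ.card : ℤ) else I.sig μ j)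

/-- `μ` is a fair matching: it lexicographically maximizes
`(Σ_i s_i, -s_n, -s_(n-1), …, -s_1)`. -/
noncomputable def FairMatching (I : OSMInstance n) (μ : Finset (Fin n × Fin n)) : Prop :=
  I.IsMatching μ ∧ ∀ μ', I.IsMatching μ' →
    LexLe (n + 1) (fun j => if j = 0 then (μ'.card : ℤ) else -I.sig μ' (n + 1 - j))
      (fun j => if j = 0 then (μ.card : ℤ) else -I.sig μ (n + 1 - j))

end OSMInstance

/-- The priority vector for rank-maximal matchings: a rank-`r` edge gets weight
`n ^ (2 * (n - r + 1))`. -/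
noncomputable def pRankMaximal (n : ℕ) : ℕ → ℝ :=
  fun r => (n : ℝ) ^ (2 * (n - r + 1))

/-- The priority vector for max-cardinality rank-maximal matchings: a rank-`r` edge gets
weight `n ^ (2 * n) + n ^ (2 * (n - r))`. -/
noncomputable def pMaxCardRankMaximal (n : ℕ) : ℕ → ℝ :=
  fun r => (n : ℝ) ^ (2 * n) + (n : ℝ) ^ (2 * (n - r))

/-- The priority vector for fair matchings: a rank-`r` edge gets weight
`4 * n ^ (2 * n) - 2 * n ^ (r - 1)`. -/
noncomputable def pFairVec (n : ℕ) : ℕ → ℝ :=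
  fun r => 4 * (n : ℝ) ^ (2 * n) - 2 * (n : ℝ) ^ (r - 1)

/-- The set `𝕡` of the three priority vectors of interest. -/
noncomputable def PrioritySet (n : ℕ) : Set (ℕ → ℝ) :=
  {pRankMaximal n, pMaxCardRankMaximal n, pFairVec n}

/-- The four matching properties considered: Pareto optimal, rank-maximal,
max-cardinality rank-maximal, and fair. -/
inductive MatchProp where
  | po | rm | mcrm | fair

/-- `μ` satisfies the property `X` with respect to the instance `I`. -/
noncomputable def SatisfiesProp {n : ℕ} (X : MatchProp) (I : OSMInstance n)
    (μ : Finset (Fin n × Fin n)) : Prop :=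
  match X with
  | .po => I.ParetoOptimal μ
  | .rm => I.RankMaximal μ
  | .mcrm => I.MaxCardRankMaximal μ
  | .fair => I.FairMatching μ

/-!
Distinct priority weights of matchings differ by at least `n`, whereas the welfare of a matching
lies in `[0, n]`, so adding the valuations can at most create a tie between matchings of different
priority weight. A tie would need a matching of welfare exactly `n`: then all `n` agents receive
an object of value `1`, every edge has rank `1`, and the priority weight is already maximal.

For the gap, the rank-maximal weights are all divisible by `n`. In the other two vectors the weights
are so close to each other, relative to their size, that a larger matching always has a larger
priority weight, by a margin of `n`; and they are all congruent modulo `n ^ 2 - 1 ≥ n`, respectively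
`2 * (n - 1) ≥ n`, which gives the gap between matchings of equal size.
-/

section FinsetSum

variable {α : Type*}

lemma sum_add_le_sum_of_card_lt {R : Type*} [Ring R] [PartialOrder R] [IsOrderedRing R]
    {f : α → R} {a b d : R} {s t : Finset α} (hfb : ∀ x ∈ s, f x ≤ b) (hfa : ∀ x ∈ t, a ≤ f x)
    (ha : 0 ≤ a) (hst : #s < #t) (hd : #s * (b - a) + d ≤ a) :
    ∑ x ∈ s, f x + d ≤ ∑ x ∈ t, f x := by
  calc ∑ x ∈ s, f x + d ≤ #s • b + d := by gcongr; exact sum_le_card_nsmul s f b hfb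
    _ = #s • a + (#s * (b - a) + d) := by rw [nsmul_eq_mul, nsmul_eq_mul, mul_sub]; abel
    _ ≤ #s • a + a := by gcongr
    _ = (#s + 1) • a := (succ_nsmul a #s).symm
    _ ≤ #t • a := nsmul_le_nsmul_left ha hst
    _ ≤ ∑ x ∈ t, f x := card_nsmul_le_sum t f a hfa

lemma sum_modEq_card_mul {f : α → ℤ} {c m : ℤ} {s : Finset α}
    (hf : ∀ x ∈ s, f x ≡ c [ZMOD m]) : ∑ x ∈ s, f x ≡ #s * c [ZMOD m] := by
  simpa only [sum_const, nsmul_eq_mul] using Int.ModEq.sum hf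

lemma add_le_of_intModEq_of_lt {x y m : ℤ} (hxy : x ≡ y [ZMOD m]) (hlt : x < y) : x + m ≤ y := by
  linarith [Int.le_of_dvd (sub_pos.2 hlt) hxy.dvd]

lemma sum_add_le_sum_of_modEq {f : α → ℤ} {a b c d m : ℤ} {N : ℕ}
    (hfa : ∀ x, a ≤ f x) (hfb : ∀ x, f x ≤ b) (hmod : ∀ x, f x ≡ c [ZMOD m])
    (hd : 0 ≤ d) (hdm : d ≤ m) (hda : N * (b - a) + d ≤ a)
    {s t : Finset α} (hs : #s ≤ N) (ht : #t ≤ N) (hlt : ∑ x ∈ s, f x < ∑ x ∈ t, f x) :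
    ∑ x ∈ s, f x + d ≤ ∑ x ∈ t, f x := by
  have larger_dominates {s t : Finset α} (hs : #s ≤ N) (hst : #s < #t) :
      ∑ x ∈ s, f x + d ≤ ∑ x ∈ t, f x := by
    obtain ⟨x, -⟩ : t.Nonempty := card_pos.1 hst.pos
    have hab : 0 ≤ b - a := sub_nonneg.2 ((hfa x).trans (hfb x))
    refine sum_add_le_sum_of_card_lt (fun x _ => hfb x) (fun x _ => hfa x)
      (le_trans (by positivity) hda) hst (le_trans ?_ hda)
    gcongr
  rcases lt_trichotomy #s #t with hst | hst | hst
  · exact larger_dominates hs hst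
  · have hsum : ∑ x ∈ s, f x ≡ ∑ x ∈ t, f x [ZMOD m] :=
      (sum_modEq_card_mul fun x _ => hmod x).trans
        (hst ▸ (sum_modEq_card_mul fun x _ => hmod x).symm)
    linarith [add_le_of_intModEq_of_lt hsum hlt]
  · linarith [larger_dominates ht hst]

end FinsetSum

section PriorityVectors

variable {n : ℕ} {p : ℕ → ℝ}

lemma nonneg_of_mem_prioritySet (hn : 1 ≤ n) (hp : p ∈ PrioritySet n) : 0 ≤ p 1 := by
  rcases hp with rfl | rfl | rfl
  · unfold pRankMaximal; positivity
  · unfold pMaxCardRankMaximal; positivity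
  · have hpow : (1 : ℝ) ≤ (n : ℝ) ^ (2 * n) := one_le_pow₀ (Nat.one_le_cast.2 hn)
    simp only [pFairVec, tsub_self, pow_zero]
    linarith

lemma isMaxOn_of_mem_prioritySet (hp : p ∈ PrioritySet n) : IsMaxOn p (Set.Icc 1 n) 1 := by
  rintro r ⟨hr, hrn⟩
  have hn : (1 : ℝ) ≤ n := Nat.one_le_cast.2 (hr.trans hrn)
  rcases hp with rfl | rfl | rfl
  · change (n : ℝ) ^ _ ≤ (n : ℝ) ^ _
    gcongr
  · change (n : ℝ) ^ _ + (n : ℝ) ^ _ ≤ (n : ℝ) ^ _ + (n : ℝ) ^ _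
    gcongr
  · change 4 * (n : ℝ) ^ _ - 2 * (n : ℝ) ^ _ ≤ 4 * (n : ℝ) ^ _ - 2 * (n : ℝ) ^ _
    gcongr

end PriorityVectors

namespace OSMInstance

variable {n : ℕ} {I : OSMInstance n} {p : ℕ → ℝ} {v : Fin n → Fin n → ℝ}
  {μ : Finset (Fin n × Fin n)}

lemma edgeRank_mem_Icc (I : OSMInstance n) (e : Fin n × Fin n) : I.edgeRank e ∈ Set.Icc 1 n := by
  have hnot : e.2 ∉ (I.accept e.1).filter (fun h => I.strictPref e.1 h e.2) :=
    fun hmem => (mem_filter.1 hmem).2.2 (mem_filter.1 hmem).2.1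
  have hlt := card_lt_univ_of_notMem hnot
  rw [Fintype.card_fin] at hlt
  exact ⟨Nat.le_add_left 1 _, hlt⟩

lemma Consistent.edgeRank_eq_one (hv : I.Consistent v) {e : Fin n × Fin n}
    (he : e.2 ∈ I.accept e.1) (hone : v e.1 e.2 = 1) : I.edgeRank e = 1 := by
  obtain ⟨hbounds, -, hpref⟩ := hv
  rw [edgeRank, Nat.add_eq_right, card_eq_zero, filter_eq_empty_iff]
  intro h hh hstrict
  exact hstrict.2 ((hpref _ _ _ he hh).2 (hone ▸ (hbounds e.1 h).2))

lemma Consistent.SW_nonneg (hv : I.Consistent v) (μ : Finset (Fin n × Fin n)) : 0 ≤ I.SW v μ :=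
  sum_nonneg fun e _ => (hv.1 e.1 e.2).1

lemma IsMatching.card_le (hμ : I.IsMatching μ) : #μ ≤ n := by
  simpa only [card_fin] using
    card_le_card_of_injOn (t := univ) Prod.fst (fun _ _ => mem_coe.2 (mem_univ _)) hμ.2.1

lemma IsMatching.card_eq_and_value_eq_one (hμ : I.IsMatching μ) (hv : I.Consistent v)
    (hSW : n ≤ I.SW v μ) : #μ = n ∧ ∀ e ∈ μ, v e.1 e.2 = 1 := by
  have hle_one : ∀ e ∈ μ, v e.1 e.2 ≤ 1 := fun e _ => (hv.1 e.1 e.2).2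
  have hSW_le : I.SW v μ ≤ ∑ _e ∈ μ, (1 : ℝ) := sum_le_sum hle_one
  have hcard : ∑ _e ∈ μ, (1 : ℝ) = #μ := by rw [sum_const, nsmul_one]
  have hcard_le : (#μ : ℝ) ≤ n := Nat.cast_le.2 hμ.card_le
  refine ⟨?_, (sum_eq_sum_iff_of_le hle_one).1 (by change I.SW v μ = _; linarith)⟩
  exact_mod_cast hcard_le.antisymm (hcard ▸ hSW.trans hSW_le)

/-- The total priority weight of a set of edges: the quantity that priority-`p` matchings
maximize. -/
noncomputable abbrev priorityWeight (I : OSMInstance n) (p : ℕ → ℝ)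
    (μ : Finset (Fin n × Fin n)) : ℝ :=
  weightSum (fun e => p (I.edgeRank e)) μ

/-- The priority vector `p` separates the matchings of `I` by `d`: distinct priority weights of
matchings differ by at least `d`. -/
def SeparatesBy (I : OSMInstance n) (p : ℕ → ℝ) (d : ℝ) : Prop :=
  ∀ ⦃μ μ'⦄, I.IsMatching μ → I.IsMatching μ' → I.priorityWeight p μ < I.priorityWeight p μ' →
    I.priorityWeight p μ + d ≤ I.priorityWeight p μ'

lemma IsMatching.isPriorityMatching_of_le_SW (hμ : I.IsMatching μ) (hv : I.Consistent v)
    (hp_nonneg : 0 ≤ p 1) (hp_max : IsMaxOn p (Set.Icc 1 n) 1) (hSW : n ≤ I.SW v μ) :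
    I.IsPriorityMatching p μ := by
  obtain ⟨hcard, hone⟩ := hμ.card_eq_and_value_eq_one hv hSW
  have hrank : ∀ e ∈ μ, p (I.edgeRank e) = p 1 := fun e he =>
    congrArg p (hv.edgeRank_eq_one (hμ.1 e he) (hone e he))
  refine ⟨hμ, fun μ' hμ' => ?_⟩
  calc I.priorityWeight p μ' ≤ #μ' • p 1 :=
        sum_le_card_nsmul _ _ _ fun e _ => hp_max (I.edgeRank_mem_Icc e)
    _ ≤ #μ • p 1 := nsmul_le_nsmul_left hp_nonneg (hμ'.card_le.trans hcard.ge)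
    _ = I.priorityWeight p μ := (sum_eq_card_nsmul hrank).symm

lemma separatesBy_intCast {q : ℕ → ℤ} {d : ℤ}
    (h : ∀ μ μ', I.IsMatching μ → I.IsMatching μ' →
      ∑ e ∈ μ, q (I.edgeRank e) < ∑ e ∈ μ', q (I.edgeRank e) →
        ∑ e ∈ μ, q (I.edgeRank e) + d ≤ ∑ e ∈ μ', q (I.edgeRank e)) :
    I.SeparatesBy (fun r => (q r : ℝ)) d := by
  intro μ μ' hμ hμ' hlt
  simp only [priorityWeight, weightSum] at hlt ⊢
  exact_mod_cast h μ μ' hμ hμ' (by exact_mod_cast hlt)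

lemma separatesBy_of_modEq (I : OSMInstance n) {q : ℕ → ℤ} {a b c m : ℤ}
    (hqa : ∀ r ∈ Set.Icc 1 n, a ≤ q r) (hqb : ∀ r ∈ Set.Icc 1 n, q r ≤ b)
    (hmod : ∀ r ∈ Set.Icc 1 n, q r ≡ c [ZMOD m]) (hm : n ≤ m) (hna : n * (b - a) + n ≤ a) :
    I.SeparatesBy (fun r => (q r : ℝ)) n := by
  exact_mod_cast separatesBy_intCast (d := n) fun μ μ' hμ hμ' hlt =>
    sum_add_le_sum_of_modEq (fun e => hqa _ (I.edgeRank_mem_Icc e))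
      (fun e => hqb _ (I.edgeRank_mem_Icc e)) (fun e => hmod _ (I.edgeRank_mem_Icc e))
      n.cast_nonneg hm hna hμ.card_le hμ'.card_le hlt

lemma separatesBy_pRankMaximal (I : OSMInstance n) : I.SeparatesBy (pRankMaximal n) n := by
  have hcast : pRankMaximal n = fun r => (((n : ℤ) ^ (2 * (n - r + 1)) : ℤ) : ℝ) := by
    ext r; simp [pRankMaximal]
  have hdvd (μ : Finset (Fin n × Fin n)) :
      (n : ℤ) ∣ ∑ e ∈ μ, (n : ℤ) ^ (2 * (n - I.edgeRank e + 1)) :=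
    dvd_sum fun e _ => dvd_pow_self _ (by positivity)
  rw [hcast]
  exact_mod_cast separatesBy_intCast (d := n) fun μ μ' _ _ hlt => add_le_of_intModEq_of_lt
    (Int.modEq_iff_dvd.2 (dvd_sub (hdvd μ') (hdvd μ))) hlt

lemma separatesBy_pMaxCardRankMaximal (hn : 2 ≤ n) (I : OSMInstance n) :
    I.SeparatesBy (pMaxCardRankMaximal n) n := by
  have hcast : pMaxCardRankMaximal n =
      fun r => (((n : ℤ) ^ (2 * n) + (n : ℤ) ^ (2 * (n - r)) : ℤ) : ℝ) := by
    ext r; simp [pMaxCardRankMaximal]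
  have hn2 : (2 : ℤ) ≤ n := by exact_mod_cast hn
  have hn1 : (1 : ℤ) ≤ n := by linarith
  rw [hcast]
  refine separatesBy_of_modEq I (a := n ^ (2 * n) + 1) (b := n ^ (2 * n) + n ^ (2 * (n - 1)))
    (c := n ^ (2 * n) + 1) (m := n ^ 2 - 1) (fun r _ => ?_) (fun r hr => ?_) (fun r _ => ?_)
    (by nlinarith [hn2]) ?_
  · gcongr
    exact one_le_pow₀ hn1
  · gcongr
    exact hr.1
  · refine Int.ModEq.add_left _ ?_
    simpa only [pow_mul, one_pow] using (Int.modEq_sub ((n : ℤ) ^ 2) 1).pow (n - r)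
  · calc (n : ℤ) * (n ^ (2 * n) + n ^ (2 * (n - 1)) - (n ^ (2 * n) + 1)) + n
        = n ^ (2 * (n - 1) + 1) := by ring
      _ ≤ n ^ (2 * n) := by gcongr; omega
      _ ≤ n ^ (2 * n) + 1 := by linarith

lemma separatesBy_pFairVec (hn : 2 ≤ n) (I : OSMInstance n) : I.SeparatesBy (pFairVec n) n := by
  have hcast : pFairVec n = fun r => ((4 * (n : ℤ) ^ (2 * n) - 2 * (n : ℤ) ^ (r - 1) : ℤ) : ℝ) := by
    ext r; simp [pFairVec]
  have hn2 : (2 : ℤ) ≤ n := by exact_mod_cast hn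
  have hn1 : (1 : ℤ) ≤ n := by linarith
  have hpow_pred : (n : ℤ) ^ (n - 1) ≤ n ^ (2 * n) := pow_le_pow_right₀ hn1 (by omega)
  have hpow_self : (n : ℤ) ^ n ≤ n ^ (2 * n) := pow_le_pow_right₀ hn1 (by omega)
  rw [hcast]
  refine separatesBy_of_modEq I (a := 4 * n ^ (2 * n) - 2 * n ^ (n - 1)) (b := 4 * n ^ (2 * n) - 2)
    (c := 4 * n ^ (2 * n) - 2) (m := 2 * (n - 1)) (fun r hr => ?_) (fun r _ => ?_) (fun r _ => ?_)
    (by linarith [hn2]) ?_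
  · gcongr
    exact hr.2
  · linarith [one_le_pow₀ hn1 (n := r - 1)]
  · refine Int.ModEq.sub_left _ ?_
    simpa only [one_pow, mul_one] using ((Int.modEq_sub (n : ℤ) 1).pow (r - 1)).mul_left' (c := 2)
  · calc (n : ℤ) * (4 * n ^ (2 * n) - 2 - (4 * n ^ (2 * n) - 2 * n ^ (n - 1))) + n
        = 2 * (n * n ^ (n - 1)) - n := by ring
      _ = 2 * n ^ n - n := by rw [mul_pow_sub_one (by omega)]
      _ ≤ 4 * n ^ (2 * n) - 2 * n ^ (n - 1) := by linarith

lemma separatesBy_of_mem_prioritySet (hn : 2 ≤ n) (I : OSMInstance n) (hp : p ∈ PrioritySet n) :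
    I.SeparatesBy p n := by
  rcases hp with rfl | rfl | rfl
  · exact separatesBy_pRankMaximal I
  · exact separatesBy_pMaxCardRankMaximal hn I
  · exact separatesBy_pFairVec hn I

end OSMInstance

theorem maxWeight_is_welfareOptimal_priority_general {n : ℕ} (I : OSMInstance n)
    (p : ℕ → ℝ) (hp_nonneg : 0 ≤ p 1) (hp_max : IsMaxOn p (Set.Icc 1 n) 1)
    (hp_sep : I.SeparatesBy p n) (v : Fin n → Fin n → ℝ) (hv : I.Consistent v)
    (μ : Finset (Fin n × Fin n))
    (hμ : I.IsMaxWeightMatching (fun e => p (I.edgeRank e) + v e.1 e.2) μ) :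
    I.IsPriorityMatching p μ ∧
      ∀ μ' : Finset (Fin n × Fin n), I.IsPriorityMatching p μ' →
        I.SW v μ' ≤ I.SW v μ := by
  have htotal : ∀ μ', I.IsMatching μ' →
      I.priorityWeight p μ' + I.SW v μ' ≤ I.priorityWeight p μ + I.SW v μ := fun μ' hμ' => by
    simpa only [OSMInstance.weightSum, OSMInstance.SW, sum_add_distrib] using hμ.2 μ' hμ'
  refine ⟨?_, fun μ' hμ' => by linarith [htotal μ' hμ'.1, hμ'.2 μ hμ.1]⟩
  by_contra hnot
  have hSW : I.SW v μ < n := by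
    by_contra! hle
    exact hnot (hμ.1.isPriorityMatching_of_le_SW hv hp_nonneg hp_max hle)
  refine hnot ⟨hμ.1, fun μ' hμ' => ?_⟩
  by_contra! hlt
  linarith [htotal μ' hμ', hp_sep hμ.1 hμ' hlt, hv.SW_nonneg μ']

/-- every maximum-weight matching for the weights `p_r + v_i(h_j)` is a
welfare-optimal priority-`p` matching, for `p ∈ 𝕡`. -/
theorem maxWeight_is_welfareOptimal_priority {n : ℕ} (hn : 2 ≤ n) (I : OSMInstance n)
    (p : ℕ → ℝ) (hp : p ∈ PrioritySet n)
    (v : Fin n → Fin n → ℝ) (hv : I.Consistent v)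
    (μ : Finset (Fin n × Fin n))
    (hμ : I.IsMaxWeightMatching (fun e => p (I.edgeRank e) + v e.1 e.2) μ) :
    I.IsPriorityMatching p μ ∧
      ∀ μ' : Finset (Fin n × Fin n), I.IsPriorityMatching p μ' →
        I.SW v μ' ≤ I.SW v μ := by
  exact maxWeight_is_welfareOptimal_priority_general I p
    (nonneg_of_mem_prioritySet (one_le_two.trans hn) hp) (isMaxOn_of_mem_prioritySet hp)
    (I.separatesBy_of_mem_prioritySet hn hp) v hv μ hμ
end

section
/- Let 0 < ε ≤ 2, let I be an instance with n agents and n objects, let p ∈ 𝕡, and let v be a valuation profile consistent with I that is unit-sum or unit-range. Set c = ⌈log(n²·(1/ε)) / log(1+ε/2)⌉ and t_k = (2/(2+ε))^k for k = 0,1,...,c (so t_0 = 1); for an edge e = (a_i, h_j) of G_I of rank r define value'(e) = t_k if there is k ∈ {1,...,c} with t_k ≤ v_i(h_j) and (k = 1 or v_i(h_j) < t_{k−1}), and value'(e) = 0 if v_i(h_j) < t_c, and set w_e = p_r + value'(e). Then every maximum-weight matching μ of G_I with respect to the weights (w_e) is a priority-p matching and satisfies SW(μ* | v) ≤ (1+ε)·SW(μ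 | v), where μ* is a priority-p matching of maximum social welfare under v. -/
open Finset
open scoped Classical

/-! Distinct total priority weights differ by at least `n`, so adding a rounded value less than `1`
to each edge weight keeps `μ` a priority matching and makes it maximize the rounded welfare among
priority matchings. Compared with any priority matching `ν`, it loses a factor `1 + ε / 2` to
rounding and at most `t c ≤ ε / n ^ 2` for each edge of `ν` that is valued below the threshold.
There are at most `n - 1` of these, because `ν` contains a rank-one edge. The additive loss is
absorbed once `SW μ ≥ 2 * (n - 1) / n ^ 2`.

A rank-one edge is worth at least `1 / n`, which settles the case where `μ` has two of them. Suppose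
`(a, h)` is the only one, and let `k` be a second-best object of `a`. If `a` takes `k` and the
displaced agents move on to their favourite objects in turn, some agents end up trading among
themselves. As this does not increase the priority weight, it must be a swap of `a` with an
agent `j` who holds its second-best object `k` and likes `h` best. The swap does not lower the
priority weight, so it cannot increase the rounded welfare: up to a factor `2` and the threshold,
`v a k + v j h` is at most `v a h + v j k`. Since the best value `x` and the second-best value `z`
of an agent satisfy `x + (n - 1) * z ≥ 1`, this bounds `v a h + v j k` from below.
-/

lemma sum_add_le_sum_of_dvd_sub {ι : Type*} {s t : Finset ι} {q : ι → ℤ} {a d : ℤ}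
    (hs : ∀ e ∈ s, d ∣ q e - a) (ht : ∀ e ∈ t, d ∣ q e - a) (hcard : #s * a = #t * a)
    (hlt : ∑ e ∈ s, q e < ∑ e ∈ t, q e) :
    ∑ e ∈ s, q e + d ≤ ∑ e ∈ t, q e := by
  have hdvd : d ∣ ∑ e ∈ t, q e - ∑ e ∈ s, q e := by
    have h := dvd_sub (dvd_sum ht) (dvd_sum hs)
    simp only [sum_sub_distrib, sum_const, nsmul_eq_mul, hcard] at h
    simpa only [sub_sub_sub_cancel_right] using h
  linarith [Int.le_of_dvd (sub_pos.2 hlt) hdvd]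

lemma sum_add_le_sum_of_card_lt_s4 {ι : Type*} {s t : Finset ι} {q : ι → ℤ} {L U : ℤ} {N : ℕ}
    (hs : ∀ e ∈ s, q e ≤ U) (ht : ∀ e ∈ t, q e ∈ Set.Icc L U) (hst : #s < #t) (htN : #t ≤ N)
    (hL : N * (U - L + 1) ≤ L) :
    ∑ e ∈ s, q e + N ≤ ∑ e ∈ t, q e := by
  obtain ⟨e, he⟩ := card_pos.1 (Nat.zero_lt_of_lt hst)
  have hLU : 0 ≤ U - L := sub_nonneg.2 ((ht e he).1.trans (ht e he).2)
  have hL0 : 0 ≤ L := (by positivity : 0 ≤ (N : ℤ) * (U - L + 1)).trans hL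
  have hst' : (#s : ℤ) + 1 ≤ #t := mod_cast hst
  have hsN : (#s : ℤ) ≤ N := mod_cast (hst.trans_le htN).le
  calc ∑ e ∈ s, q e + N ≤ #s * U + N := by
        gcongr
        simpa only [nsmul_eq_mul] using sum_le_card_nsmul s q U hs
    _ ≤ (#s + 1) * L := by linarith [mul_le_mul_of_nonneg_right hsN hLU]
    _ ≤ #t * L := by gcongr
    _ ≤ ∑ e ∈ t, q e := by
        simpa only [nsmul_eq_mul] using card_nsmul_le_sum t q L fun e he => (ht e he).1

lemma exists_nonempty_image_eq_self {α : Type*} [Finite α] [DecidableEq α] [Nonempty α]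
    (f : α → α) : ∃ C : Finset α, C.Nonempty ∧ C.image f = C := by
  have := Fintype.ofFinite α
  obtain ⟨C, hC⟩ := (Set.toFinite {C : Finset α | C.Nonempty ∧ C.image f ⊆ C}).exists_minimal
    ⟨univ, univ_nonempty, subset_univ _⟩
  exact ⟨C, hC.1.1, hC.eq_of_le ⟨hC.1.1.image f, image_subset_image hC.1.2⟩ hC.1.2⟩

lemma injective_piecewise_of_image_eq {α β : Type*} [DecidableEq α] [DecidableEq β] {f g : α → β}
    (hg : Function.Injective g) {C : Finset α} (hC : C.image f = C.image g) :
    Function.Injective (C.piecewise f g) := by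
  rw [← piecewise_coe, Set.injective_piecewise_iff]
  refine ⟨?_, hg.injOn, fun i hi j hj hij => ?_⟩
  · rw [← card_image_iff, hC, card_image_of_injective _ hg]
  · have hgj : g j ∈ C.image g := hC ▸ hij ▸ mem_image_of_mem f hi
    exact hj (hg.mem_finset_image.1 hgj)

/-- The order conditions on a priority vector under which better ranks always carry larger,
positive weight. -/
structure IsPriorityVector (n : ℕ) (p : ℕ → ℝ) : Prop where
  strictAntiOn : StrictAntiOn p (Set.Icc 1 n)
  pos : ∀ r ∈ Set.Icc 1 n, 0 < p r

lemma isPriorityVector_of_mem_prioritySet {n : ℕ} {p : ℕ → ℝ} (hp : p ∈ PrioritySet n) :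
    IsPriorityVector n p where
  strictAntiOn := by
    rintro r ⟨hr, -⟩ s ⟨-, hs⟩ hrs
    have hn : (1 : ℝ) < n := mod_cast hr.trans_lt (hrs.trans_le hs)
    rcases hp with rfl | rfl | rfl
    · exact pow_lt_pow_right₀ hn (by omega)
    · exact add_lt_add_right (pow_lt_pow_right₀ hn (by omega)) _
    · have hpow : (n : ℝ) ^ (r - 1) < (n : ℝ) ^ (s - 1) := pow_lt_pow_right₀ hn (by omega)
      simp only [pFairVec]
      linarith
  pos := by
    rintro r ⟨hr, hrn⟩
    have hn : (1 : ℝ) ≤ n := mod_cast hr.trans hrn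
    have hn0 : (0 : ℝ) < n := one_pos.trans_le hn
    rcases hp with rfl | rfl | rfl
    · exact pow_pos hn0 _
    · exact add_pos (pow_pos hn0 _) (pow_pos hn0 _)
    · have hpow : (n : ℝ) ^ (r - 1) ≤ (n : ℝ) ^ (2 * n) := pow_le_pow_right₀ hn (by omega)
      simp only [pFairVec]
      linarith [pow_pos hn0 (2 * n)]

namespace OSMInstance

variable {n : ℕ} {I : OSMInstance n} {p : ℕ → ℝ} {v : Fin n → Fin n → ℝ}
  {μ : Finset (Fin n × Fin n)}

lemma edgeRank_lt_of_strictPref {i h h' : Fin n} (hh : h ∈ I.accept i) (hh' : h' ∈ I.accept i)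
    (hpref : I.strictPref i h' h) : I.edgeRank (i, h') < I.edgeRank (i, h) := by
  refine Nat.succ_lt_succ (card_lt_card (ssubset_iff_of_subset (fun k hk => ?_) |>.2
    ⟨h', mem_filter.2 ⟨hh', hpref⟩, fun hmem => ?_⟩))
  · obtain ⟨hk, hkh', hh'k⟩ := mem_filter.1 hk
    exact mem_filter.2 ⟨hk, I.pref_trans i k h' h hk hh' hh hkh' hpref.1,
      fun hhk => hh'k (I.pref_trans i h' h k hh' hh hk hpref.1 hhk)⟩
  · exact (mem_filter.1 hmem).2.2 (mem_filter.1 hmem).2.1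

lemma exists_mem_forall_not_strictPref {i : Fin n} {T : Finset (Fin n)} (hT : T ⊆ I.accept i)
    (hne : T.Nonempty) : ∃ h ∈ T, ∀ h' ∈ T, ¬ I.strictPref i h' h := by
  obtain ⟨h, hh, hmin⟩ := exists_min_image T (fun h => I.edgeRank (i, h)) hne
  exact ⟨h, hh, fun h' hh' hpref =>
    (hmin h' hh').not_gt (edgeRank_lt_of_strictPref (hT hh) (hT hh') hpref)⟩

lemma exists_edgeRank_eq_one (I : OSMInstance n) (i : Fin n) :
    ∃ h ∈ I.accept i, I.edgeRank (i, h) = 1 := by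
  obtain ⟨h, hh, hmax⟩ := exists_mem_forall_not_strictPref subset_rfl (I.accept_nonempty i)
  exact ⟨h, hh, by simpa only [edgeRank, Nat.add_eq_right, card_eq_zero, filter_eq_empty_iff]⟩

lemma exists_ne_edgeRank_le_two {i : Fin n} (hi : 1 < #(I.accept i)) (h : Fin n) :
    ∃ k ∈ I.accept i, k ≠ h ∧ I.edgeRank (i, k) ≤ 2 := by
  obtain ⟨k, hk, hmax⟩ := exists_mem_forall_not_strictPref (erase_subset h (I.accept i))
    (by obtain ⟨k, hk, hkh⟩ := exists_mem_ne hi h; exact ⟨k, mem_erase.2 ⟨hkh, hk⟩⟩)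
  refine ⟨k, mem_of_mem_erase hk, ne_of_mem_erase hk, Nat.succ_le_succ ?_⟩
  suffices {h' ∈ I.accept i | I.strictPref i h' k} ⊆ {h} from card_le_card this
  intro h' hh'
  obtain ⟨hacc, hpref⟩ := mem_filter.1 hh'
  exact mem_singleton.2 <| by_contra fun hne => hmax h' (mem_erase.2 ⟨hne, hacc⟩) hpref

/-! ### Matchings and trades -/

lemma isMatching_of_apply_eq {ρ : Fin n → Fin n} (hρ : Function.Injective ρ)
    (hacc : ∀ e ∈ μ, e.2 ∈ I.accept e.1) (hμ : ∀ e ∈ μ, ρ e.1 = e.2) : I.IsMatching μ :=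
  ⟨hacc, fun e he e' he' h => Prod.ext h (by rw [← hμ e he, ← hμ e' he', h]),
    fun e he e' he' h => Prod.ext (hρ (by rw [hμ e he, hμ e' he', h])) h⟩

lemma IsMatching.exists_perm (hμ : I.IsMatching μ) :
    ∃ σ : Equiv.Perm (Fin n), ∀ e ∈ μ, σ e.1 = e.2 := by
  obtain ⟨σ, hσ⟩ := Equiv.Perm.exists_extending_pair (fun e : μ => e.1.1) (fun e : μ => e.1.2)
    (fun e e' h => Subtype.ext (hμ.2.1 e e.2 e' e'.2 h))
    (fun e e' h => Subtype.ext (hμ.2.2 e e.2 e' e'.2 h))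
  exact ⟨σ, fun e he => hσ ⟨e, he⟩⟩

/-- A nonempty group `C` of agents who can trade among themselves the objects assigned to them by
the permutation `σ`, an extension of the matching `μ` to all agents, so that each `i ∈ C` receives
`τ i`. Objects that `σ` gives to agents unmatched in `μ` may take part in the trade. -/
structure IsTradingGroup (μ : Finset (Fin n × Fin n)) (σ : Equiv.Perm (Fin n))
    (τ : Fin n → Fin n) (C : Finset (Fin n)) : Prop where
  nonempty : C.Nonempty
  apply_eq : ∀ e ∈ μ, σ e.1 = e.2
  image_eq : C.image τ = C.image σ

lemma IsMatching.exists_isTradingGroup [Nonempty (Fin n)] (hμ : I.IsMatching μ)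
    (τ : Fin n → Fin n) : ∃ σ C, IsTradingGroup μ σ τ C := by
  obtain ⟨σ, hσ⟩ := hμ.exists_perm
  obtain ⟨C, hne, hC⟩ := exists_nonempty_image_eq_self (σ.symm ∘ τ)
  refine ⟨σ, C, hne, hσ, ?_⟩
  conv_rhs => rw [← hC, image_image]
  simp only [← Function.comp_assoc, Equiv.self_comp_symm, Function.id_comp]

lemma IsMaxWeightMatching.sum_le_of_isTradingGroup {w : Fin n × Fin n → ℝ}
    (hμ : I.IsMaxWeightMatching w μ) {σ : Equiv.Perm (Fin n)} {τ : Fin n → Fin n}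
    {C : Finset (Fin n)} (hC : IsTradingGroup μ σ τ C) (hτ : ∀ i ∈ C, τ i ∈ I.accept i) :
    ∑ i ∈ C, w (i, τ i) ≤ ∑ i ∈ C with (i, σ i) ∈ μ, w (i, σ i) := by
  set traded := C.image fun i => (i, τ i)
  set kept := {e ∈ μ | e.1 ∉ C}
  have hmatching : I.IsMatching (traded ∪ kept) := by
    refine isMatching_of_apply_eq (injective_piecewise_of_image_eq σ.injective hC.image_eq) ?_ ?_
      <;> refine fun e he => (mem_union.1 he).elim (fun he => ?_) fun he => ?_
    · obtain ⟨i, hi, rfl⟩ := mem_image.1 he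
      exact hτ i hi
    · exact hμ.1.1 e (mem_filter.1 he).1
    · obtain ⟨i, hi, rfl⟩ := mem_image.1 he
      exact piecewise_eq_of_mem C τ σ hi
    · rw [piecewise_eq_of_notMem C τ σ (mem_filter.1 he).2, hC.apply_eq e (mem_filter.1 he).1]
  have hdisj : Disjoint traded kept := by
    refine disjoint_left.2 fun e he hkept => (mem_filter.1 hkept).2 ?_
    obtain ⟨i, hi, rfl⟩ := mem_image.1 he
    exact hi
  have htraded : ∑ e ∈ traded, w e = ∑ i ∈ C, w (i, τ i) :=
    sum_image fun i _ j _ h => congrArg Prod.fst h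
  have hheld : ∑ i ∈ C with (i, σ i) ∈ μ, w (i, σ i) = ∑ e ∈ μ with e.1 ∈ C, w e := by
    have hσ : ∀ e ∈ {e ∈ μ | e.1 ∈ C}, (e.1, σ e.1) = e := fun e he =>
      Prod.ext rfl (hC.apply_eq e (mem_filter.1 he).1)
    refine sum_bij' (fun i _ => (i, σ i)) (fun e _ => e.1) (fun i hi => ?_) (fun e he => ?_)
      (fun _ _ => rfl) hσ fun _ _ => rfl
    · exact mem_filter.2 (mem_filter.1 hi).symm
    · rw [mem_filter, hσ e he]
      exact (mem_filter.1 he).symm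
  have hmax := hμ.2 _ hmatching
  rw [weightSum, weightSum, sum_union hdisj, htraded,
    ← sum_filter_add_sum_filter_not μ (fun e => e.1 ∈ C), ← hheld] at hmax
  exact le_of_add_le_add_right hmax

lemma IsMaxWeightMatching.add_le_add_of_swap {w : Fin n × Fin n → ℝ}
    (hμ : I.IsMaxWeightMatching w μ) {a j h k : Fin n} (hja : j ≠ a) (hah : (a, h) ∈ μ)
    (hjk : (j, k) ∈ μ) (hk : k ∈ I.accept a) (hh : h ∈ I.accept j) :
    w (a, k) + w (j, h) ≤ w (a, h) + w (j, k) := by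
  obtain ⟨σ, hσ⟩ := hμ.1.exists_perm
  have hσa : σ a = h := hσ _ hah
  have hσj : σ j = k := hσ _ hjk
  have hC : IsTradingGroup μ σ (σ ∘ Equiv.swap a j) {a, j} :=
    ⟨insert_nonempty _ _, hσ, by simp [image_insert, pair_comm]⟩
  have hsum := hμ.sum_le_of_isTradingGroup hC (by simp [hσa, hσj, hk, hh])
  simpa [sum_filter, sum_pair hja.symm, hσa, hσj, hah, hjk] using hsum

/-- The priority weight of the edge of `μ` at agent `i`, or `0` if `i` is unmatched; `σ` is a
permutation extending `μ`. -/
noncomputable def heldWeight (I : OSMInstance n) (p : ℕ → ℝ) (μ : Finset (Fin n × Fin n))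
    (σ : Equiv.Perm (Fin n)) (i : Fin n) : ℝ :=
  if (i, σ i) ∈ μ then p (I.edgeRank (i, σ i)) else 0

lemma heldWeight_le (hp : IsPriorityVector n p) {σ : Equiv.Perm (Fin n)} {i : Fin n} {r : ℕ}
    (hr : r ∈ Set.Icc 1 n) (hrank : (i, σ i) ∈ μ → r ≤ I.edgeRank (i, σ i)) :
    I.heldWeight p μ σ i ≤ p r := by
  rw [heldWeight]
  split_ifs with hi
  · exact hp.strictAntiOn.antitoneOn hr (I.edgeRank_mem_Icc _) (hrank hi)
  · exact (hp.pos r hr).le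

lemma mem_and_edgeRank_le_of_le_heldWeight (hp : IsPriorityVector n p) {σ : Equiv.Perm (Fin n)}
    {i : Fin n} {r : ℕ} (hr : r ∈ Set.Icc 1 n) (hle : p r ≤ I.heldWeight p μ σ i) :
    (i, σ i) ∈ μ ∧ I.edgeRank (i, σ i) ≤ r := by
  rw [heldWeight] at hle
  split_ifs at hle with hi
  · exact ⟨hi, (hp.strictAntiOn.le_iff_ge hr (I.edgeRank_mem_Icc _)).1 hle⟩
  · exact absurd hle (hp.pos r hr).not_ge

lemma IsPriorityMatching.sum_le_sum_heldWeight (hμ : I.IsPriorityMatching p μ)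
    {σ : Equiv.Perm (Fin n)} {τ : Fin n → Fin n} {C : Finset (Fin n)}
    (hC : IsTradingGroup μ σ τ C) (hτ : ∀ i ∈ C, τ i ∈ I.accept i) :
    ∑ i ∈ C, p (I.edgeRank (i, τ i)) ≤ ∑ i ∈ C, I.heldWeight p μ σ i :=
  (hμ.sum_le_of_isTradingGroup hC hτ).trans_eq (sum_filter _ _)

lemma IsPriorityMatching.exists_mem_edgeRank_eq_one_of_isTradingGroup (hp : IsPriorityVector n p)
    (hμ : I.IsPriorityMatching p μ) {σ : Equiv.Perm (Fin n)} {τ : Fin n → Fin n}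
    {C : Finset (Fin n)} (hC : IsTradingGroup μ σ τ C)
    (hτ : ∀ i ∈ C, τ i ∈ I.accept i ∧ I.edgeRank (i, τ i) = 1) :
    ∃ i ∈ C, (i, σ i) ∈ μ ∧ I.edgeRank (i, σ i) = 1 := by
  obtain ⟨i, hi, hle⟩ :=
    exists_le_of_sum_le hC.nonempty (hμ.sum_le_sum_heldWeight hC fun i hi => (hτ i hi).1)
  obtain ⟨hiμ, hrank⟩ :=
    mem_and_edgeRank_le_of_le_heldWeight hp ⟨le_rfl, i.pos⟩ ((hτ i hi).2 ▸ hle)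
  exact ⟨i, hi, hiμ, hrank.antisymm (I.edgeRank_mem_Icc _).1⟩

lemma IsPriorityMatching.exists_edgeRank_eq_one [Nonempty (Fin n)] (hp : IsPriorityVector n p)
    (hμ : I.IsPriorityMatching p μ) : ∃ e ∈ μ, I.edgeRank e = 1 := by
  choose top htop using I.exists_edgeRank_eq_one
  obtain ⟨σ, C, hC⟩ := hμ.1.exists_isTradingGroup top
  obtain ⟨i, -, hi, hrank⟩ :=
    hμ.exists_mem_edgeRank_eq_one_of_isTradingGroup hp hC fun i _ => htop i
  exact ⟨_, hi, hrank⟩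

lemma IsTradingGroup.apply_eq_of_eq_pair {σ : Equiv.Perm (Fin n)} {τ : Fin n → Fin n}
    {a j : Fin n} (hC : IsTradingGroup μ σ τ {a, j}) (hne : τ a ≠ σ a) :
    σ j = τ a ∧ τ j = σ a := by
  have himage : {τ a, τ j} = ({σ a, σ j} : Finset (Fin n)) := by
    simpa only [image_insert, image_singleton] using hC.image_eq
  have hτa : τ a ∈ ({σ a, σ j} : Finset (Fin n)) := himage ▸ mem_insert_self _ _
  have hσa : σ a ∈ ({τ a, τ j} : Finset (Fin n)) := himage ▸ mem_insert_self _ _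
  simp only [mem_insert, mem_singleton, hne, hne.symm, false_or] at hτa hσa
  exact ⟨hτa.symm, hσa.symm⟩

lemma card_le_one_of_sum_sub_le {ι : Type*} {D : Finset ι} {f : ι → ℝ} {x y : ℝ} (hyx : y < x)
    (hf : ∀ i ∈ D, f i ≤ y) (hsum : ∑ i ∈ D, (x - f i) ≤ x - y) : #D ≤ 1 := by
  have hcard : (#D : ℝ) * (x - y) ≤ 1 * (x - y) := by
    rw [one_mul, ← nsmul_eq_mul]
    exact (card_nsmul_le_sum D _ _ fun i hi => sub_le_sub_left (hf i hi) x).trans hsum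
  exact_mod_cast le_of_mul_le_mul_right hcard (sub_pos.2 hyx)

lemma IsPriorityMatching.exists_isTradingGroup_mem (hp : IsPriorityVector n p)
    (hμ : I.IsPriorityMatching p μ) {a h : Fin n}
    (huniq : ∀ e ∈ μ, I.edgeRank e = 1 → e = (a, h)) (k : Fin n) :
    ∃ σ τ C, IsTradingGroup μ σ τ C ∧ a ∈ C ∧ τ a = k ∧
      ∀ i ≠ a, τ i ∈ I.accept i ∧ I.edgeRank (i, τ i) = 1 := by
  have : Nonempty (Fin n) := ⟨a⟩
  choose top htop using I.exists_edgeRank_eq_one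
  have hτ : ∀ i ≠ a, Function.update top a k i ∈ I.accept i ∧
      I.edgeRank (i, Function.update top a k i) = 1 := fun i hi => by
    rw [Function.update_of_ne hi]
    exact htop i
  obtain ⟨σ, C, hC⟩ := hμ.1.exists_isTradingGroup (Function.update top a k)
  refine ⟨σ, _, C, hC, by_contra fun ha => ?_, Function.update_self a k top, hτ⟩
  obtain ⟨i, hi, hiμ, hi1⟩ := hμ.exists_mem_edgeRank_eq_one_of_isTradingGroup hp hC
    fun i hi => hτ i (ne_of_mem_of_not_mem hi ha)
  obtain ⟨rfl, -⟩ := Prod.mk.inj (huniq _ hiμ hi1)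
  exact ha hi

lemma IsTradingGroup.exists_erase_eq_singleton {σ : Equiv.Perm (Fin n)} {τ : Fin n → Fin n}
    {C : Finset (Fin n)} (hC : IsTradingGroup μ σ τ C) {a : Fin n} (hne : τ a ≠ σ a)
    (hcard : #(C.erase a) ≤ 1) : ∃ j, C.erase a = {j} := by
  refine card_eq_one.1 (hcard.antisymm (card_pos.2 (nonempty_iff_ne_empty.2 fun hempty => hne ?_)))
  have hCa : C = {a} := ((erase_eq_empty_iff C a).1 hempty).resolve_left hC.nonempty.ne_empty
  simpa [hCa] using hC.image_eq

-- Serving `a` at rank at most 2 costs at most `p 1 - p 2`, which is the least gain of any other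
-- trader; so there is exactly one other trader, and its gain is `p 1 - p 2`.
lemma IsPriorityMatching.exists_eq_pair_of_isTradingGroup (hp : IsPriorityVector n p)
    (hμ : I.IsPriorityMatching p μ) {a h : Fin n} (hah : (a, h) ∈ μ)
    (huniq : ∀ e ∈ μ, I.edgeRank e = 1 → e = (a, h))
    {σ : Equiv.Perm (Fin n)} {τ : Fin n → Fin n} {C : Finset (Fin n)}
    (hC : IsTradingGroup μ σ τ C) (ha : a ∈ C) (hτa : τ a ∈ I.accept a) (hτah : τ a ≠ h)
    (hτa2 : I.edgeRank (a, τ a) ≤ 2)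
    (hτ : ∀ i ≠ a, τ i ∈ I.accept i ∧ I.edgeRank (i, τ i) = 1) :
    ∃ j ≠ a, C = {a, j} ∧ (j, σ j) ∈ μ ∧ I.edgeRank (j, σ j) = 2 := by
  have hn : 2 ≤ n := by have := Fin.val_ne_of_ne hτah; omega
  have hone : 1 ∈ Set.Icc 1 n := ⟨le_rfl, one_le_two.trans hn⟩
  have htwo : 2 ∈ Set.Icc 1 n := ⟨one_le_two, hn⟩
  have hσa : σ a = h := hC.apply_eq _ hah
  have hrank : ∀ i ∈ C.erase a, (i, σ i) ∈ μ → 2 ≤ I.edgeRank (i, σ i) := fun i hi hiμ =>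
    (I.edgeRank_mem_Icc _).1.lt_of_ne' fun hi1 =>
      ne_of_mem_erase hi (congrArg Prod.fst (huniq _ hiμ hi1))
  have hsum : ∑ i ∈ C.erase a, (p 1 - I.heldWeight p μ σ i) ≤ p 1 - p 2 := by
    have hpa : p 2 ≤ p (I.edgeRank (a, τ a)) :=
      hp.strictAntiOn.antitoneOn (I.edgeRank_mem_Icc _) htwo hτa2
    have hheld : I.heldWeight p μ σ a ≤ p 1 :=
      heldWeight_le hp hone fun _ => (I.edgeRank_mem_Icc _).1
    have hmax := hμ.sum_le_sum_heldWeight hC fun i _ => by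
      obtain rfl | hi := eq_or_ne i a
      exacts [hτa, (hτ i hi).1]
    rw [← add_sum_erase C _ ha, ← add_sum_erase C _ ha,
      sum_congr rfl fun i hi => by rw [(hτ i (ne_of_mem_erase hi)).2]] at hmax
    rw [sum_sub_distrib]
    linarith
  have hcard : #(C.erase a) ≤ 1 :=
    card_le_one_of_sum_sub_le (hp.strictAntiOn hone htwo one_lt_two)
      (fun i hi => heldWeight_le hp htwo (hrank i hi)) hsum
  obtain ⟨j, hj⟩ := hC.exists_erase_eq_singleton (hσa ▸ hτah) hcard
  have hjC : j ∈ C.erase a := hj ▸ mem_singleton_self j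
  rw [hj, sum_singleton, sub_le_sub_iff_left] at hsum
  obtain ⟨hjμ, hj2⟩ := mem_and_edgeRank_le_of_le_heldWeight hp htwo hsum
  exact ⟨j, ne_of_mem_erase hjC, by rw [← hj, insert_erase ha], hjμ,
    hj2.antisymm (hrank j hjC hjμ)⟩

lemma IsPriorityMatching.exists_exchange_partner (hp : IsPriorityVector n p)
    (hμ : I.IsPriorityMatching p μ) {a h k : Fin n} (hah : (a, h) ∈ μ)
    (huniq : ∀ e ∈ μ, I.edgeRank e = 1 → e = (a, h))
    (hk : k ∈ I.accept a) (hkh : k ≠ h) (hk2 : I.edgeRank (a, k) ≤ 2) :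
    ∃ j ≠ a, (j, k) ∈ μ ∧ I.edgeRank (j, k) = 2 ∧ h ∈ I.accept j ∧ I.edgeRank (j, h) = 1 := by
  obtain ⟨σ, τ, C, hC, ha, rfl, hτ⟩ := hμ.exists_isTradingGroup_mem hp huniq k
  obtain ⟨j, hja, rfl, hjμ, hj2⟩ :=
    hμ.exists_eq_pair_of_isTradingGroup hp hah huniq hC ha hk hkh hk2 hτ
  have hσa : σ a = h := hC.apply_eq _ hah
  obtain ⟨hσj, hτj⟩ := hC.apply_eq_of_eq_pair (hσa ▸ hkh)
  exact ⟨j, hja, hσj ▸ hjμ, hσj ▸ hj2, hσa ▸ hτj ▸ hτ j hja⟩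

/-! ### Gaps between total priority weights -/

/-- Total priority weights of two matchings that differ do so by at least `n`. Since a matching has
at most `n` edges, perturbing each edge weight by less than `1` then cannot reverse the order of two
total weights. -/
def HasWeightGap (I : OSMInstance n) (p : ℕ → ℝ) : Prop :=
  ∀ μ ν, I.IsMatching μ → I.IsMatching ν →
    weightSum (fun e => p (I.edgeRank e)) μ < weightSum (fun e => p (I.edgeRank e)) ν →
    weightSum (fun e => p (I.edgeRank e)) μ + n ≤ weightSum (fun e => p (I.edgeRank e)) ν

lemma hasWeightGap_of_int (I : OSMInstance n) {q : ℕ → ℤ} (hpq : ∀ r, p r = q r)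
    (hq : ∀ μ ν, I.IsMatching μ → I.IsMatching ν →
      ∑ e ∈ μ, q (I.edgeRank e) < ∑ e ∈ ν, q (I.edgeRank e) →
      ∑ e ∈ μ, q (I.edgeRank e) + n ≤ ∑ e ∈ ν, q (I.edgeRank e)) :
    I.HasWeightGap p := by
  intro μ ν hμ hν hlt
  simp only [weightSum, hpq] at hlt ⊢
  exact_mod_cast hq μ ν hμ hν (mod_cast hlt)

lemma hasWeightGap_of_dvd (I : OSMInstance n) {q : ℕ → ℤ} {d : ℤ} (hpq : ∀ r, p r = q r)
    (hd : n ≤ d) (hq : ∀ r ∈ Set.Icc 1 n, d ∣ q r) : I.HasWeightGap p := by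
  have hdvd : ∀ e, d ∣ q (I.edgeRank e) - 0 := fun e => by
    simpa only [sub_zero] using hq _ (I.edgeRank_mem_Icc e)
  refine I.hasWeightGap_of_int hpq fun μ ν _ _ hlt => ?_
  linarith [sum_add_le_sum_of_dvd_sub (fun e _ => hdvd e) (fun e _ => hdvd e)
    (by simp only [mul_zero]) hlt]

-- When `n ≤ 1` the rank is constant, so matchings of equal size have equal weight and the
-- divisibility condition is vacuous; this matters because the moduli below vanish at `n = 1`.
lemma hasWeightGap_of_dvd_sub (I : OSMInstance n) {q : ℕ → ℤ} {a d L U : ℤ}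
    (hpq : ∀ r, p r = q r) (hd : 1 < n → n ≤ d) (hq : ∀ r ∈ Set.Icc 1 n, d ∣ q r - a)
    (hqLU : ∀ r ∈ Set.Icc 1 n, q r ∈ Set.Icc L U) (hL : n * (U - L + 1) ≤ L) :
    I.HasWeightGap p := by
  have hdvd : ∀ e, d ∣ q (I.edgeRank e) - a := fun e => hq _ (I.edgeRank_mem_Icc e)
  have hLU : ∀ e, q (I.edgeRank e) ∈ Set.Icc L U := fun e => hqLU _ (I.edgeRank_mem_Icc e)
  refine I.hasWeightGap_of_int hpq fun μ ν hμ hν hlt => ?_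
  obtain hcard | hcard | hcard := lt_trichotomy #μ #ν
  · exact sum_add_le_sum_of_card_lt_s4 (fun e _ => (hLU e).2) (fun e _ => hLU e) hcard hν.card_le hL
  · obtain hn | hn := Nat.lt_or_ge 1 n
    · linarith [hd hn, sum_add_le_sum_of_dvd_sub (fun e _ => hdvd e) (fun e _ => hdvd e)
        (by rw [hcard]) hlt]
    · have hrank : ∀ e, q (I.edgeRank e) = q 1 := fun e => by
        rw [le_antisymm ((I.edgeRank_mem_Icc e).2.trans hn) (I.edgeRank_mem_Icc e).1]
      simp only [hrank, sum_const, hcard, lt_irrefl] at hlt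
  · linarith [sum_add_le_sum_of_card_lt_s4 (fun e _ => (hLU e).2) (fun e _ => hLU e) hcard
      hμ.card_le hL]

lemma hasWeightGap_pRankMaximal (I : OSMInstance n) : I.HasWeightGap (pRankMaximal n) :=
  I.hasWeightGap_of_dvd (q := fun r => (n : ℤ) ^ (2 * (n - r + 1))) (d := (n : ℤ) ^ 2)
    (fun r => by simp [pRankMaximal]) (mod_cast Nat.le_self_pow two_ne_zero n)
    fun r _ => pow_dvd_pow _ (by omega)

lemma hasWeightGap_pMaxCardRankMaximal (I : OSMInstance n) (hn : 0 < n) :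
    I.HasWeightGap (pMaxCardRankMaximal n) := by
  have hn1 : (1 : ℤ) ≤ n := mod_cast hn
  refine I.hasWeightGap_of_dvd_sub (q := fun r => (n : ℤ) ^ (2 * n) + n ^ (2 * (n - r)))
    (a := n ^ (2 * n) + 1) (d := n ^ 2 - 1) (L := n ^ (2 * n) + 1)
    (U := n ^ (2 * n) + n ^ (2 * (n - 1))) (fun r => by simp [pMaxCardRankMaximal])
    (fun hn2 => ?_) (fun r _ => ?_) (fun r hr => ⟨?_, ?_⟩) ?_
  · have : (2 : ℤ) ≤ n := mod_cast hn2
    nlinarith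
  · rw [add_sub_add_left_eq_sub, pow_mul]
    exact sub_one_dvd_pow_sub_one _ _
  · gcongr
    exact one_le_pow₀ hn1
  · gcongr
    exact hr.1
  · have hpow : (n : ℤ) * n ^ (2 * (n - 1)) ≤ n ^ (2 * n) := by
      rw [← pow_succ']
      exact pow_le_pow_right₀ hn1 (by omega)
    linarith

lemma hasWeightGap_pFairVec (I : OSMInstance n) (hn : 0 < n) : I.HasWeightGap (pFairVec n) := by
  have hn1 : (1 : ℤ) ≤ n := mod_cast hn
  refine I.hasWeightGap_of_dvd_sub (q := fun r => 4 * (n : ℤ) ^ (2 * n) - 2 * n ^ (r - 1))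
    (a := 4 * n ^ (2 * n) - 2) (d := 2 * (n - 1)) (L := 4 * n ^ (2 * n) - 2 * n ^ (n - 1))
    (U := 4 * n ^ (2 * n) - 2) (fun r => by simp [pFairVec])
    (fun hn2 => ?_) (fun r _ => ?_) (fun r hr => ⟨?_, ?_⟩) ?_
  · have : (2 : ℤ) ≤ n := mod_cast hn2
    linarith
  · rw [sub_sub_sub_cancel_left, ← dvd_neg, neg_sub, ← mul_sub_one]
    exact mul_dvd_mul_left 2 (sub_one_dvd_pow_sub_one _ _)
  · gcongr
    exact hr.2
  · linarith [one_le_pow₀ hn1 (n := r - 1)]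
  · have hpow : (n : ℤ) ^ (n - 1) ≤ n ^ (2 * n) := pow_le_pow_right₀ hn1 (by omega)
    have hsucc : (n : ℤ) * n ^ (n - 1) ≤ n ^ (2 * n) := by
      rw [← pow_succ']
      exact pow_le_pow_right₀ hn1 (by omega)
    linarith

lemma hasWeightGap_of_mem_prioritySet (I : OSMInstance n) (hp : p ∈ PrioritySet n) :
    I.HasWeightGap p := by
  obtain rfl | hn := n.eq_zero_or_pos
  · exact fun μ ν _ _ hlt => absurd hlt (by simp [Subsingleton.elim μ ν])
  · rcases hp with rfl | rfl | rfl
    exacts [I.hasWeightGap_pRankMaximal, I.hasWeightGap_pMaxCardRankMaximal hn,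
      I.hasWeightGap_pFairVec hn]

lemma weightSum_add (w g : Fin n × Fin n → ℝ) (μ : Finset (Fin n × Fin n)) :
    weightSum (fun e => w e + g e) μ = weightSum w μ + weightSum g μ :=
  sum_add_distrib

lemma IsMaxWeightMatching.weightSum_le_of_add {w g : Fin n × Fin n → ℝ}
    {ν : Finset (Fin n × Fin n)} (hμ : I.IsMaxWeightMatching (fun e => w e + g e) μ)
    (hν : I.IsMaxWeightMatching w ν) : weightSum g ν ≤ weightSum g μ := by
  have hμν := hμ.2 ν hν.1
  rw [weightSum_add, weightSum_add] at hμν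
  linarith [hν.2 μ hμ.1]

lemma HasWeightGap.isPriorityMatching (hgap : I.HasWeightGap p) {g : Fin n × Fin n → ℝ}
    (hg : ∀ i, ∀ h ∈ I.accept i, g (i, h) ∈ Set.Ico 0 1)
    (hμ : I.IsMaxWeightMatching (fun e => p (I.edgeRank e) + g e) μ) :
    I.IsPriorityMatching p μ := by
  refine ⟨hμ.1, fun ν hν => le_of_not_gt fun hlt => ?_⟩
  have hμν := hμ.2 ν hν
  rw [weightSum_add, weightSum_add] at hμν
  have hgν : 0 ≤ weightSum g ν := sum_nonneg fun e he => (hg e.1 e.2 (hν.1 e he)).1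
  have hne : μ.Nonempty := by
    rw [nonempty_iff_ne_empty]
    rintro rfl
    simp only [weightSum, sum_empty] at hμν hlt hgν
    linarith
  have hgμ : weightSum g μ < n := calc
    weightSum g μ < ∑ e ∈ μ, 1 :=
      sum_lt_sum_of_nonempty hne fun e he => (hg e.1 e.2 (hμ.1.1 e he)).2
    _ ≤ n := by simpa only [sum_const, nsmul_eq_mul, mul_one, Nat.cast_le] using hμ.1.card_le
  linarith [hgap μ ν hμ.1 hν hlt]

/-! ### Valuations and their roundings -/

lemma Consistent.nonneg (hv : I.Consistent v) (i h : Fin n) : 0 ≤ v i h := (hv.1 i h).1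

lemma Consistent.strictPref_iff (hv : I.Consistent v) {i h h' : Fin n} (hh : h ∈ I.accept i)
    (hh' : h' ∈ I.accept i) : I.strictPref i h h' ↔ v i h' < v i h := by
  rw [strictPref, hv.2.2 i h h' hh hh', hv.2.2 i h' h hh' hh, lt_iff_le_not_ge]

lemma Consistent.edgeRank_eq (hv : I.Consistent v) {i h : Fin n} (hh : h ∈ I.accept i) :
    I.edgeRank (i, h) = #{h' ∈ I.accept i | v i h < v i h'} + 1 := by
  rw [edgeRank, filter_congr fun h' hh' => hv.strictPref_iff hh' hh]

lemma Consistent.le_of_edgeRank_eq_one (hv : I.Consistent v) {i h h' : Fin n}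
    (hh : h ∈ I.accept i) (hh' : h' ∈ I.accept i) (hrank : I.edgeRank (i, h) = 1) :
    v i h' ≤ v i h := by
  rw [hv.edgeRank_eq hh, Nat.add_eq_right, card_eq_zero, filter_eq_empty_iff] at hrank
  exact not_lt.1 (hrank hh')

lemma Consistent.le_of_ne_of_edgeRank_le_two (hv : I.Consistent v) {i h h' k : Fin n}
    (hh : h ∈ I.accept i) (hh' : h' ∈ I.accept i) (hk : k ∈ I.accept i) (hne : h' ≠ h)
    (hrank : I.edgeRank (i, h) = 1) (hrank2 : I.edgeRank (i, k) ≤ 2) : v i h' ≤ v i k := by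
  rw [hv.edgeRank_eq hk, Nat.succ_le_succ_iff] at hrank2
  by_contra! hlt
  exact hne (card_le_one.1 hrank2 h' (mem_filter.2 ⟨hh', hlt⟩) h
    (mem_filter.2 ⟨hh, hlt.trans_le (hv.le_of_edgeRank_eq_one hh hh' hrank)⟩))

lemma one_le_sum_of_unitSum_or_unitRange (hv : I.Consistent v)
    (hval : I.UnitSum v ∨ I.UnitRange v) (i : Fin n) : 1 ≤ ∑ h ∈ I.accept i, v i h := by
  obtain hsum | hrange := hval
  · exact (hsum i).ge
  · obtain ⟨⟨h, hh, h1⟩, -⟩ := hrange i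
    exact h1 ▸ single_le_sum (fun h' _ => hv.nonneg i h') hh

lemma Consistent.one_le_add_mul_of_edgeRank_le_two (hv : I.Consistent v) {i h k : Fin n}
    (hsum : 1 ≤ ∑ h ∈ I.accept i, v i h) (hh : h ∈ I.accept i) (hk : k ∈ I.accept i)
    (hrank : I.edgeRank (i, h) = 1) (hrank2 : I.edgeRank (i, k) ≤ 2) :
    1 ≤ v i h + (n - 1) * v i k := by
  have hcard : (#((I.accept i).erase h) : ℝ) ≤ n - 1 := by
    have : #(I.accept i) ≤ n := by simpa using card_le_univ (I.accept i)
    rw [cast_card_erase_of_mem hh]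
    exact sub_le_sub_right (mod_cast this) 1
  calc 1 ≤ v i h + ∑ h' ∈ (I.accept i).erase h, v i h' := by rwa [add_sum_erase _ _ hh]
    _ ≤ v i h + #((I.accept i).erase h) * v i k := by
      gcongr
      rw [← nsmul_eq_mul]
      exact sum_le_card_nsmul _ _ _ fun h' hh' => hv.le_of_ne_of_edgeRank_le_two hh
        (mem_of_mem_erase hh') hk (ne_of_mem_erase hh') hrank hrank2
    _ ≤ v i h + (n - 1) * v i k := by
      gcongr
      exact hv.nonneg i k

lemma Consistent.one_le_mul_of_edgeRank_eq_one (hv : I.Consistent v) {i h : Fin n}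
    (hsum : 1 ≤ ∑ h ∈ I.accept i, v i h) (hh : h ∈ I.accept i) (hrank : I.edgeRank (i, h) = 1) :
    1 ≤ n * v i h := by
  linarith [hv.one_le_add_mul_of_edgeRank_le_two hsum hh hh hrank (hrank.trans_le one_le_two)]

lemma one_lt_card_accept_of_lt_one {i h : Fin n} (hsum : 1 ≤ ∑ h ∈ I.accept i, v i h)
    (hh : h ∈ I.accept i) (hlt : v i h < 1) : 1 < #(I.accept i) := by
  refine lt_of_not_ge fun hcard => ?_
  rw [eq_singleton_iff_unique_mem.2 ⟨hh, fun h' hh' => card_le_one.1 hcard h' hh' h hh⟩,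
    sum_singleton] at hsum
  exact hsum.not_gt hlt

lemma Consistent.SW_mono (hv : I.Consistent v) {ν : Finset (Fin n × Fin n)} (h : ν ⊆ μ) :
    I.SW v ν ≤ I.SW v μ :=
  sum_le_sum_of_subset_of_nonneg h fun e _ _ => hv.nonneg e.1 e.2

lemma Consistent.le_SW (hv : I.Consistent v) {e : Fin n × Fin n} (he : e ∈ μ) :
    v e.1 e.2 ≤ I.SW v μ := by
  simpa [SW] using hv.SW_mono (singleton_subset_iff.2 he)

lemma Consistent.add_le_SW (hv : I.Consistent v) {e e' : Fin n × Fin n} (he : e ∈ μ)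
    (he' : e' ∈ μ) (hne : e ≠ e') : v e.1 e.2 + v e'.1 e'.2 ≤ I.SW v μ := by
  have hsub : {e, e'} ⊆ μ := insert_subset he (singleton_subset_iff.2 he')
  simpa [SW, sum_pair hne] using hv.SW_mono hsub

/-- `g` is a rounding of the valuation profile `v` to values in `[0, 1)`: it never exceeds `v`, and
it loses at most a factor `1 + δ` on values that are at least the threshold `θ ∈ [0, 1]`. -/
structure IsRounding (I : OSMInstance n) (v : Fin n → Fin n → ℝ) (g : Fin n × Fin n → ℝ)
    (δ θ : ℝ) : Prop where
  threshold_mem : θ ∈ Set.Icc 0 1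
  mem_Ico : ∀ i, ∀ h ∈ I.accept i, g (i, h) ∈ Set.Ico 0 1
  le_val : ∀ i, ∀ h ∈ I.accept i, g (i, h) ≤ v i h
  val_le : ∀ i, ∀ h ∈ I.accept i, θ ≤ v i h → v i h ≤ (1 + δ) * g (i, h)

variable {g : Fin n × Fin n → ℝ} {δ θ : ℝ}

lemma IsRounding.val_le_add (hg : I.IsRounding v g δ θ) (hδ : 0 ≤ δ) {i h : Fin n}
    (hh : h ∈ I.accept i) : v i h ≤ (1 + δ) * g (i, h) + θ := by
  obtain hle | hlt := le_or_gt θ (v i h)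
  · exact (hg.val_le i h hh hle).trans (le_add_of_nonneg_right hg.threshold_mem.1)
  · exact hlt.le.trans (le_add_of_nonneg_left (mul_nonneg (by linarith) (hg.mem_Ico i h hh).1))

lemma IsRounding.weightSum_le_SW (hg : I.IsRounding v g δ θ) (hμ : I.IsMatching μ) :
    weightSum g μ ≤ I.SW v μ :=
  sum_le_sum fun e he => hg.le_val e.1 e.2 (hμ.1 e he)

lemma IsRounding.SW_le (hg : I.IsRounding v g δ θ) (hδ : 0 ≤ δ)
    (hμ : I.IsMatching μ) {e : Fin n × Fin n} (he : e ∈ μ) (hle : θ ≤ v e.1 e.2) :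
    I.SW v μ ≤ (1 + δ) * weightSum g μ + (n - 1) * θ := by
  have hcard : (#(μ.erase e) : ℝ) ≤ n - 1 := by
    rw [cast_card_erase_of_mem he]
    exact sub_le_sub_right (mod_cast hμ.card_le) 1
  calc I.SW v μ = v e.1 e.2 + ∑ e' ∈ μ.erase e, v e'.1 e'.2 := (add_sum_erase _ _ he).symm
    _ ≤ (1 + δ) * g e + ∑ e' ∈ μ.erase e, ((1 + δ) * g e' + θ) := by
      gcongr with e' he'
      · exact hg.val_le e.1 e.2 (hμ.1 e he) hle
      · exact hg.val_le_add hδ (hμ.1 e' (mem_of_mem_erase he'))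
    _ = (1 + δ) * weightSum g μ + #(μ.erase e) * θ := by
      rw [weightSum, ← add_sum_erase _ _ he, sum_add_distrib, sum_const, nsmul_eq_mul, mul_add,
        mul_sum, add_assoc]
    _ ≤ (1 + δ) * weightSum g μ + (n - 1) * θ := by
      gcongr
      exact hg.threshold_mem.1

lemma Consistent.threshold_le_of_edgeRank_eq_one (hv : I.Consistent v) {i h : Fin n}
    (hsum : 1 ≤ ∑ h ∈ I.accept i, v i h) (hh : h ∈ I.accept i) (hrank : I.edgeRank (i, h) = 1)
    (hθ : n * θ ≤ 1) : θ ≤ v i h :=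
  le_of_mul_le_mul_left (hθ.trans (hv.one_le_mul_of_edgeRank_eq_one hsum hh hrank))
    (Nat.cast_pos.2 i.pos)

lemma two_mul_sub_one_le_of_exchange {N x y z w : ℝ} (hN : 2 ≤ N) (hx : 1 ≤ N * x)
    (hxz : 1 ≤ x + (N - 1) * z) (hyw : 1 ≤ y + (N - 1) * w)
    (hexch : N ^ 2 * (y + z) ≤ 2 * (N ^ 2 * (x + w)) + 2) :
    2 * (N - 1) ≤ N ^ 2 * (x + w) := by
  have hN0 : 0 ≤ N * (N * (N - 2)) := by
    have : 0 ≤ N - 2 := by linarith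
    positivity
  have hN1 : 0 ≤ N - 1 := by linarith
  have hyz : N ^ 3 ≤ N ^ 2 * ((N - 1) ^ 2 * w + x) + (N - 1) * (N ^ 2 * (y + z)) := by
    linarith [mul_le_mul_of_nonneg_left hxz (sq_nonneg N),
      mul_le_mul_of_nonneg_left hyw (mul_nonneg (sq_nonneg N) hN1)]
  have hsum : N ^ 3 - 2 * (N - 1) ≤
      (N ^ 2 - 1) * (N ^ 2 * (x + w)) - N * (N * (N - 2)) * (N * x) := by
    linarith [mul_le_mul_of_nonneg_left hexch hN1]
  refine le_of_mul_le_mul_left ?_ (show 0 < N ^ 2 - 1 by nlinarith)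
  linarith [mul_le_mul_of_nonneg_left hx hN0]

lemma IsPriorityMatching.exists_exchange_partner_add_le (hp : IsPriorityVector n p)
    (hμ : I.IsPriorityMatching p μ)
    (hμg : I.IsMaxWeightMatching (fun e => p (I.edgeRank e) + g e) μ) {a h k : Fin n}
    (hah : (a, h) ∈ μ) (hah1 : I.edgeRank (a, h) = 1)
    (huniq : ∀ e ∈ μ, I.edgeRank e = 1 → e = (a, h)) (hk : k ∈ I.accept a) (hkh : k ≠ h)
    (hk2 : I.edgeRank (a, k) ≤ 2) :
    ∃ j ≠ a, (j, k) ∈ μ ∧ I.edgeRank (j, k) = 2 ∧ h ∈ I.accept j ∧ I.edgeRank (j, h) = 1 ∧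
      g (a, k) + g (j, h) ≤ g (a, h) + g (j, k) := by
  obtain ⟨j, hja, hjk, hjk2, hh, hjh1⟩ := hμ.exists_exchange_partner hp hah huniq hk hkh hk2
  have hn : 2 ∈ Set.Icc 1 n := hjk2 ▸ I.edgeRank_mem_Icc (j, k)
  have hpk : p 2 ≤ p (I.edgeRank (a, k)) :=
    hp.strictAntiOn.antitoneOn (I.edgeRank_mem_Icc _) hn hk2
  have hswap := hμg.add_le_add_of_swap hja hah hjk hk hh
  rw [hah1, hjk2, hjh1] at hswap
  exact ⟨j, hja, hjk, hjk2, hh, hjh1, by linarith⟩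

lemma IsRounding.two_mul_sub_one_le_SW_of_unique (hg : I.IsRounding v g δ θ)
    (hδ : δ ∈ Set.Icc 0 1) (hθ : n ^ 2 * θ ≤ 2) (hv : I.Consistent v)
    (hsum : ∀ i, 1 ≤ ∑ h ∈ I.accept i, v i h) (hp : IsPriorityVector n p)
    (hμ : I.IsPriorityMatching p μ)
    (hμg : I.IsMaxWeightMatching (fun e => p (I.edgeRank e) + g e) μ) {a h : Fin n}
    (hah : (a, h) ∈ μ) (hah1 : I.edgeRank (a, h) = 1)
    (huniq : ∀ e ∈ μ, I.edgeRank e = 1 → e = (a, h)) (hlt : v a h < 1) :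
    2 * ((n : ℝ) - 1) ≤ n ^ 2 * I.SW v μ := by
  have hh : h ∈ I.accept a := hμ.1.1 _ hah
  obtain ⟨k, hk, hkh, hk2⟩ :=
    exists_ne_edgeRank_le_two (one_lt_card_accept_of_lt_one (hsum a) hh hlt) h
  obtain ⟨j, hja, hjk, hjk2, hhj, hjh1, hexch⟩ :=
    hμ.exists_exchange_partner_add_le hp hμg hah hah1 huniq hk hkh hk2
  have hkj : k ∈ I.accept j := hμ.1.1 _ hjk
  have hn : (2 : ℝ) ≤ n := by have := Fin.val_ne_of_ne hkh; exact_mod_cast (by omega : 2 ≤ n)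
  have hround : ∀ i, ∀ h' ∈ I.accept i, (1 + δ) * g (i, h') ≤ 2 * g (i, h') := fun i h' hh' =>
    mul_le_mul_of_nonneg_right (by linarith [hδ.2]) (hg.mem_Ico i h' hh').1
  have hjh : v j h ≤ 2 * g (j, h) := (hg.val_le j h hhj <|
    hv.threshold_le_of_edgeRank_eq_one (hsum j) hhj hjh1 (by nlinarith)).trans (hround j h hhj)
  have hak : v a k ≤ 2 * g (a, k) + θ :=
    (hg.val_le_add hδ.1 hk).trans (add_le_add_left (hround a k hk) θ)
  calc 2 * ((n : ℝ) - 1) ≤ n ^ 2 * (v a h + v j k) := by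
        refine two_mul_sub_one_le_of_exchange hn
          (hv.one_le_mul_of_edgeRank_eq_one (hsum a) hh hah1)
          (hv.one_le_add_mul_of_edgeRank_le_two (hsum a) hh hk hah1 hk2)
          (hv.one_le_add_mul_of_edgeRank_le_two (hsum j) hhj hkj hjh1 hjk2.le) ?_
        have hle : v j h + v a k ≤ 2 * (v a h + v j k) + θ := by
          linarith [hg.le_val a h hh, hg.le_val j k hkj]
        linarith [mul_le_mul_of_nonneg_left hle (sq_nonneg (n : ℝ))]
    _ ≤ n ^ 2 * I.SW v μ := by
        gcongr
        exact hv.add_le_SW hah hjk fun h => hja (congrArg Prod.fst h).symm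

lemma IsRounding.two_mul_sub_one_le_SW (hg : I.IsRounding v g δ θ)
    (hδ : δ ∈ Set.Icc 0 1) (hθ : n ^ 2 * θ ≤ 2) (hv : I.Consistent v)
    (hsum : ∀ i, 1 ≤ ∑ h ∈ I.accept i, v i h) (hp : IsPriorityVector n p)
    (hμ : I.IsPriorityMatching p μ)
    (hμg : I.IsMaxWeightMatching (fun e => p (I.edgeRank e) + g e) μ) [Nonempty (Fin n)] :
    2 * ((n : ℝ) - 1) ≤ n ^ 2 * I.SW v μ := by
  obtain ⟨⟨a, h⟩, hah, hah1⟩ := hμ.exists_edgeRank_eq_one hp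
  have htop : ∀ e ∈ μ, I.edgeRank e = 1 → 1 ≤ n * v e.1 e.2 := fun e he he1 =>
    hv.one_le_mul_of_edgeRank_eq_one (hsum e.1) (hμ.1.1 e he) he1
  by_cases huniq : ∀ e ∈ μ, I.edgeRank e = 1 → e = (a, h)
  · obtain hlt | hge := lt_or_ge (v a h) 1
    · exact hg.two_mul_sub_one_le_SW_of_unique hδ hθ hv hsum hp hμ hμg hah hah1 huniq hlt
    · nlinarith [sq_nonneg ((n : ℝ) - 1), hv.le_SW hah]
  · push Not at huniq
    obtain ⟨e, he, he1, hne⟩ := huniq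
    have hle := mul_le_mul_of_nonneg_left (hv.add_le_SW he hah hne) (Nat.cast_nonneg (α := ℝ) n)
    nlinarith [htop e he he1, htop _ hah hah1]

lemma isRounding_of_geometric_thresholds (hv : I.Consistent v) (hδ : 0 < δ) {c : ℕ} {t : ℕ → ℝ}
    (ht : ∀ k, t k = (1 + δ)⁻¹ ^ k)
    (hg : ∀ i h, h ∈ I.accept i →
      (∃ k, 1 ≤ k ∧ k ≤ c ∧ t k ≤ v i h ∧ (k = 1 ∨ v i h < t (k - 1)) ∧ g (i, h) = t k) ∨
      (v i h < t c ∧ g (i, h) = 0)) :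
    I.IsRounding v g δ (t c) where
  threshold_mem := by
    rw [ht]
    exact ⟨by positivity, pow_le_one₀ (by positivity) (inv_le_one_of_one_le₀ (by linarith))⟩
  mem_Ico i h hh := by
    have hδ1 : (1 + δ)⁻¹ < 1 := inv_lt_one_of_one_lt₀ (by linarith)
    obtain ⟨k, hk, -, -, -, hgk⟩ | ⟨-, hg0⟩ := hg i h hh
    · rw [hgk, ht]
      exact ⟨by positivity, pow_lt_one₀ (by positivity) hδ1 (by omega)⟩
    · rw [hg0]
      exact ⟨le_rfl, one_pos⟩
  le_val i h hh := by
    obtain ⟨k, -, -, hle, -, hgk⟩ | ⟨-, hg0⟩ := hg i h hh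
    exacts [hgk ▸ hle, hg0 ▸ hv.nonneg i h]
  val_le i h hh hle := by
    obtain ⟨k, hk, -, -, hlt, hgk⟩ | ⟨hlt, -⟩ := hg i h hh
    · have hstep : (1 + δ) * t k = t (k - 1) := by
        rw [ht, ht, ← pow_sub_one_mul (by omega), mul_comm, mul_assoc,
          inv_mul_cancel₀ (by linarith), mul_one]
      rw [hgk, hstep]
      obtain rfl | hlt := hlt
      · rw [ht, pow_zero]
        exact (hv.1 i h).2
      · exact hlt.le
    · exact absurd hle hlt.not_ge

end OSMInstance

lemma le_pow_ceil_log_div_log {b x : ℝ} (hb : 1 < b) :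
    x ≤ b ^ ⌈Real.log x / Real.log b⌉₊ := by
  obtain hx | hx := le_or_gt x 0
  · exact hx.trans (by positivity)
  · rw [← Real.rpow_natCast, ← Real.logb_le_iff_le_rpow hb hx]
    exact Nat.le_ceil _

lemma mul_inv_pow_ceil_log_div_log_le {b x y : ℝ} (hb : 1 < b) (hy : 0 < y) :
    x * b⁻¹ ^ ⌈Real.log (x * (1 / y)) / Real.log b⌉₊ ≤ y := by
  rw [inv_pow, ← div_eq_mul_inv, div_le_iff₀ (by positivity), ← div_le_iff₀' hy, div_eq_mul_one_div]
  exact le_pow_ceil_log_div_log hb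

theorem adaptive_approx_priority_general {n : ℕ} (I : OSMInstance n) {p : ℕ → ℝ}
    {v : Fin n → Fin n → ℝ} {g : Fin n × Fin n → ℝ} {μ ν : Finset (Fin n × Fin n)} {ε θ : ℝ}
    (hε : 0 ≤ ε) (hε2 : ε ≤ 2) (hp : IsPriorityVector n p) (hgap : I.HasWeightGap p)
    (hv : I.Consistent v) (hsum : ∀ i, 1 ≤ ∑ h ∈ I.accept i, v i h)
    (hg : I.IsRounding v g (ε / 2) θ) (hθ : n ^ 2 * θ ≤ ε)
    (hμ : I.IsMaxWeightMatching (fun e => p (I.edgeRank e) + g e) μ)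
    (hν : I.IsPriorityMatching p ν) :
    I.IsPriorityMatching p μ ∧ I.SW v ν ≤ (1 + ε) * I.SW v μ := by
  have hprio := hgap.isPriorityMatching hg.mem_Ico hμ
  refine ⟨hprio, ?_⟩
  obtain hempty | hne := isEmpty_or_nonempty (Fin n)
  · simp [OSMInstance.SW, eq_empty_of_isEmpty]
  obtain ⟨e, he, he1⟩ := hν.exists_edgeRank_eq_one hp
  have hn : (1 : ℝ) ≤ n := mod_cast e.1.pos
  have hδ : ε / 2 ∈ Set.Icc 0 1 := ⟨by linarith, by linarith⟩
  have hnθ : n * θ ≤ 1 := by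
    obtain hn1 | hn2 := (Nat.one_le_cast.1 hn).eq_or_lt
    · simpa [← hn1] using hg.threshold_mem.2
    · have : (2 : ℝ) ≤ n := mod_cast hn2
      nlinarith
  have hlow := hg.two_mul_sub_one_le_SW hδ (hθ.trans hε2) hv hsum hp hprio hμ
  have hsmall : (n - 1) * θ ≤ ε / 2 * I.SW v μ := by
    refine le_of_mul_le_mul_left ?_ (show 0 < (n : ℝ) ^ 2 by positivity)
    linarith [mul_le_mul_of_nonneg_left hθ (sub_nonneg.2 hn),
      mul_le_mul_of_nonneg_left hlow hδ.1]
  calc I.SW v ν ≤ (1 + ε / 2) * OSMInstance.weightSum g ν + (n - 1) * θ :=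
        hg.SW_le hδ.1 hν.1 he
          (hv.threshold_le_of_edgeRank_eq_one (hsum _) (hν.1.1 e he) he1 hnθ)
    _ ≤ (1 + ε / 2) * I.SW v μ + ε / 2 * I.SW v μ := by
        gcongr
        exact (hμ.weightSum_le_of_add hν).trans (hg.weightSum_le_SW hprio.1)
    _ = (1 + ε) * I.SW v μ := by ring

/-- the adaptive threshold algorithm achieves a `(1+ε)`-approximation to the
optimal welfare among priority-`p` matchings, for `p ∈ 𝕡` and unit-sum or unit-range
valuations. -/
theorem adaptive_approx_priority {n : ℕ} (I : OSMInstance n)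
    (ε : ℝ) (hε : 0 < ε) (hε2 : ε ≤ 2)
    (p : ℕ → ℝ) (hp : p ∈ PrioritySet n)
    (v : Fin n → Fin n → ℝ) (hv : I.Consistent v)
    (hvval : I.UnitSum v ∨ I.UnitRange v)
    (c : ℕ) (hc : c = ⌈Real.log ((n : ℝ) ^ 2 * (1 / ε)) / Real.log (1 + ε / 2)⌉₊)
    (t : ℕ → ℝ) (ht : ∀ k, t k = (2 / (2 + ε)) ^ k)
    (val' : Fin n × Fin n → ℝ)
    (hval' : ∀ i h, h ∈ I.accept i →
      (∃ k, 1 ≤ k ∧ k ≤ c ∧ t k ≤ v i h ∧ (k = 1 ∨ v i h < t (k - 1)) ∧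
        val' (i, h) = t k) ∨
      (v i h < t c ∧ val' (i, h) = 0))
    (μ : Finset (Fin n × Fin n))
    (hμ : I.IsMaxWeightMatching (fun e => p (I.edgeRank e) + val' e) μ)
    (μstar : Finset (Fin n × Fin n)) (hstar : I.IsPriorityMatching p μstar)
    (hstaropt : ∀ μ'', I.IsPriorityMatching p μ'' → I.SW v μ'' ≤ I.SW v μstar) :
    I.IsPriorityMatching p μ ∧ I.SW v μstar ≤ (1 + ε) * I.SW v μ := by
  have hratio : 2 / (2 + ε) = (1 + ε / 2)⁻¹ := by field_simp
  simp only [hratio] at ht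
  refine adaptive_approx_priority_general I hε.le hε2 (isPriorityVector_of_mem_prioritySet hp)
    (I.hasWeightGap_of_mem_prioritySet hp) hv
    (OSMInstance.one_le_sum_of_unitSum_or_unitRange hv hvval)
    (OSMInstance.isRounding_of_geometric_thresholds hv (half_pos hε) ht hval') ?_ hμ hstar
  rw [ht, hc]
  exact mul_inv_pow_ceil_log_div_log_le (by linarith) hε
end

section
/- Let 0 < ε ≤ 2, let I be an instance with n agents and n objects, and let v be a valuation profile consistent with I that is unit-sum or unit-range. Set c = ⌈log(n²·(1/ε)) / log(1+ε/2)⌉ and t_k = (2/(2+ε))^k for k = 0,1,...,c (so t_0 = 1); for an edge e = (a_i, h_j) of G_I define value'(e) = t_k if there is k ∈ {1,...,c} with t_k ≤ v_i(h_j) and (k = 1 or v_i(h_j) < t_{k−1}), and value'(e) = 0 if v_i(h_j) < t_c. Let μ' be a maximum-weight matching of G_I with respect to the weights w_e = value'(e). Then every Pareto optimal matching μ with SW(μ | v) ≥ SW(μ' | v) satisfies SW(μ* | v) ≤ (1+ε)·SW(μ | v), where μ* is a Pareto optimal matching of maximum social welfare under v. -/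
open Finset
open scoped Classical

/-!
Let `T` be the smallest threshold, so `n² T ≤ ε`, and let `Q` be the welfare of the maximum-weight
matching `μ'`. In a matching `M` of welfare at least `1`, the `b` edges of value at least `T` lose
at most a factor `1 + ε / 2` in the rounding, so together they are worth at most `(1 + ε / 2) Q`;
the at most `n - b` other edges are worth at most `(n - b) T ≤ ε / (4 b)`, by AM-GM. It remains to
see that `1 / (2 b) ≤ Q`. If this fails for some `2 ≤ b`, the two bounds give
`1 ≤ SW M < (1 + ε) / (2 b) ≤ 3 / 4`. For `b = 1` the only edge of value at least `T` has value at
least `1 - ε / 4`, hence is rounded to the first threshold, which is at least `1 / 2`.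

A matching of welfare at least `1` exists: under unit-range valuations a single edge will do, and
under unit-sum valuations the `n` cyclic shifts partition the edges of `G_I`, which are worth `n`
in total.
-/

/-- `y` is the value `x` rounded down to the largest of the thresholds `t 1, …, t c` below it, or
to `0` if there is none. The case `k = 1` also covers the values above `t 0`. -/
def IsThresholdRounding (t : ℕ → ℝ) (c : ℕ) (x y : ℝ) : Prop :=
  (∃ k, 1 ≤ k ∧ k ≤ c ∧ t k ≤ x ∧ (k = 1 ∨ x < t (k - 1)) ∧ y = t k) ∨ (x < t c ∧ y = 0)

namespace IsThresholdRounding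

variable {t : ℕ → ℝ} {c : ℕ} {x y : ℝ}

theorem le (h : IsThresholdRounding t c x y) (hx : 0 ≤ x) : y ≤ x := by
  rcases h with ⟨k, -, -, hk, -, rfl⟩ | ⟨-, rfl⟩
  · exact hk
  · exact hx

theorem le_mul (h : IsThresholdRounding t c x y) {r : ℝ} (ht : ∀ k, t k ≤ r * t (k + 1))
    (hx : x ≤ t 0) (hc : t c ≤ x) : x ≤ r * y := by
  rcases h with ⟨k, hk, -, -, hprev, rfl⟩ | ⟨hlt, -⟩
  · obtain ⟨j, rfl⟩ := Nat.exists_eq_add_of_le' hk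
    have hxj : x ≤ t j := by
      rcases hprev with hj | hlt
      · rwa [Nat.succ.inj hj]
      · exact hlt.le
    exact hxj.trans (ht j)
  · exact absurd hc hlt.not_ge

theorem threshold_le (h : IsThresholdRounding t c x y) (ht : Antitone t) (hc : t c ≤ x) {k : ℕ}
    (hk : 1 ≤ k) (hkx : t k ≤ x) : t k ≤ y := by
  rcases h with ⟨j, -, -, -, hprev, rfl⟩ | ⟨hlt, -⟩
  · refine ht (not_lt.1 fun hkj => ?_)
    rcases hprev with rfl | hlt
    · omega
    · exact hlt.not_ge ((ht (Nat.le_sub_one_of_lt hkj)).trans hkx)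
  · exact absurd hc hlt.not_ge

end IsThresholdRounding

/-- The geometric thresholds `t_k = (2 / (2 + ε)) ^ k` to which values are rounded. -/
noncomputable def threshold (ε : ℝ) (k : ℕ) : ℝ :=
  (2 / (2 + ε)) ^ k

section Threshold

variable {ε : ℝ}

theorem threshold_zero : threshold ε 0 = 1 :=
  pow_zero _

theorem threshold_one : threshold ε 1 = 2 / (2 + ε) :=
  pow_one _

theorem threshold_pos (hε : 0 ≤ ε) (k : ℕ) : 0 < threshold ε k :=
  pow_pos (by positivity) k

theorem threshold_antitone (hε : 0 ≤ ε) : Antitone (threshold ε) :=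
  pow_right_anti₀ (by positivity) (div_le_one_of_le₀ (by linarith) (by positivity))

theorem threshold_eq_mul_threshold_succ (hε : 0 ≤ ε) (k : ℕ) :
    threshold ε k = (1 + ε / 2) * threshold ε (k + 1) := by
  unfold threshold
  rw [pow_succ]
  field_simp

theorem sq_mul_threshold_le {n c : ℕ} (hn : 0 < n) (hε : 0 < ε)
    (hc : Real.log ((n : ℝ) ^ 2 * (1 / ε)) / Real.log (1 + ε / 2) ≤ c) :
    (n : ℝ) ^ 2 * threshold ε c ≤ ε := by
  have hlog : 0 < Real.log (1 + ε / 2) := Real.log_pos (by linarith)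
  have hpow : (n : ℝ) ^ 2 * (1 / ε) ≤ (1 + ε / 2) ^ c := by
    rw [div_le_iff₀ hlog, ← Real.log_pow] at hc
    exact (Real.log_le_log_iff (by positivity) (by positivity)).1 hc
  have hthreshold : threshold ε c = ((1 + ε / 2) ^ c)⁻¹ := by
    rw [threshold, ← inv_pow]
    field_simp
  rw [hthreshold, ← div_eq_mul_inv, div_le_iff₀ (by positivity)]
  rwa [mul_one_div, div_le_iff₀' hε] at hpow

theorem mul_threshold_le_one {n c : ℕ} (hε : 0 ≤ ε) (h : (n : ℝ) ^ 2 * threshold ε c ≤ 2) :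
    n * threshold ε c ≤ 1 := by
  have hT := (threshold_pos hε c).le
  rcases Nat.lt_or_ge n 2 with hn | hn
  · have hn1 : (n : ℝ) ≤ 1 := by exact_mod_cast Nat.le_of_lt_succ hn
    exact mul_le_one₀ hn1 hT (threshold_zero (ε := ε) ▸ threshold_antitone hε c.zero_le)
  · have hn2 : (2 : ℝ) ≤ n := by exact_mod_cast hn
    have := mul_le_mul_of_nonneg_right hn2 (mul_nonneg n.cast_nonneg hT)
    linarith

theorem threshold_one_le (hε : 0 ≤ ε) (hε2 : ε ≤ 2) : threshold ε 1 ≤ 1 - ε / 4 := by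
  rw [threshold_one, div_le_iff₀ (by positivity)]
  nlinarith [mul_nonneg hε (sub_nonneg.2 hε2)]

theorem half_le_threshold_one (hε : 0 ≤ ε) (hε2 : ε ≤ 2) : 1 / 2 ≤ threshold ε 1 := by
  rw [threshold_one, div_le_div_iff₀ two_pos (by positivity)]
  linarith

end Threshold

theorem sub_mul_le_div_four_mul {N b T ε : ℝ} (hb : 0 < b) (hT : 0 ≤ T) (h : N ^ 2 * T ≤ ε) :
    (N - b) * T ≤ ε / (4 * b) := by
  rw [le_div_iff₀ (by positivity)]
  calc (N - b) * T * (4 * b) = 4 * (N - b) * b * T := by ring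
    _ ≤ (N - b + b) ^ 2 * T := mul_le_mul_of_nonneg_right (four_mul_le_sq_add _ _) hT
    _ ≤ ε := by rwa [sub_add_cancel]

theorem one_div_two_mul_le_of_one_le {b ε Q : ℝ} (hb : 2 ≤ b) (hε : 0 ≤ ε) (hε2 : ε ≤ 2)
    (h : 1 ≤ (1 + ε / 2) * Q + ε / (4 * b)) : 1 / (2 * b) ≤ Q := by
  by_contra! hQ
  have hquarter : 1 / (2 * b) ≤ 1 / 4 := one_div_le_one_div_of_le (by norm_num) (by linarith)
  have : (1 : ℝ) < 3 / 4 :=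
    calc 1 ≤ (1 + ε / 2) * Q + ε / (4 * b) := h
      _ < (1 + ε / 2) * (1 / (2 * b)) + ε / (4 * b) := by gcongr
      _ = (1 + ε) * (1 / (2 * b)) := by ring
      _ ≤ (1 + 2) * (1 / 4) := by gcongr
      _ = 3 / 4 := by norm_num
  norm_num at this

namespace OSMInstance

variable {n : ℕ} {I : OSMInstance n} {v : Fin n → Fin n → ℝ} {w : Fin n × Fin n → ℝ}
  {M μ' : Finset (Fin n × Fin n)}

theorem IsMatching.subset (hM : I.IsMatching M) {B : Finset (Fin n × Fin n)} (hB : B ⊆ M) :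
    I.IsMatching B :=
  ⟨fun e he => hM.1 e (hB he), fun e he e' he' => hM.2.1 e (hB he) e' (hB he'),
    fun e he e' he' => hM.2.2 e (hB he) e' (hB he')⟩

theorem IsMatching.card_le_s5 (hM : I.IsMatching M) : #M ≤ n := by
  simpa using Finset.card_le_card_of_injOn (t := univ) Prod.fst (fun _ _ => mem_univ _) hM.2.1

theorem isMatching_singleton {i h : Fin n} (hh : h ∈ I.accept i) : I.IsMatching {(i, h)} := by
  simp [IsMatching, hh]

theorem SW_singleton (i h : Fin n) : I.SW v {(i, h)} = v i h :=
  sum_singleton _ _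

/-- The edges `(i, h)` of `G_I` in the cyclic shift by `s`, that is, those with `h - i = s`. -/
noncomputable def shiftMatching (I : OSMInstance n) (s : Fin n) : Finset (Fin n × Fin n) :=
  {e | e.2 ∈ I.accept e.1 ∧ e.2 - e.1 = s}

theorem isMatching_shiftMatching (s : Fin n) : I.IsMatching (I.shiftMatching s) := by
  have : NeZero n := ⟨s.pos.ne'⟩
  simp only [IsMatching, shiftMatching, mem_filter_univ]
  refine ⟨fun e he => he.1, ?_, ?_⟩
  · rintro ⟨i, h⟩ ⟨-, rfl⟩ ⟨_, h'⟩ ⟨-, hshift⟩ rfl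
    exact Prod.ext rfl (sub_left_inj.1 hshift).symm
  · rintro ⟨i, h⟩ ⟨-, rfl⟩ ⟨i', _⟩ ⟨-, hshift⟩ rfl
    exact Prod.ext (sub_right_inj.1 hshift).symm rfl

theorem sum_SW_shiftMatching :
    ∑ s, I.SW v (I.shiftMatching s) = ∑ i, ∑ h ∈ I.accept i, v i h := by
  simp only [SW, shiftMatching, ← filter_filter]
  rw [sum_fiberwise, sum_filter, Fintype.sum_prod_type]
  simp only [← sum_filter, filter_univ_mem]

theorem exists_one_le_SW_of_unitSum (hn : 0 < n) (hsum : I.UnitSum v) :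
    ∃ M, I.IsMatching M ∧ 1 ≤ I.SW v M := by
  have : Nonempty (Fin n) := ⟨⟨0, hn⟩⟩
  have htotal : ∑ _s : Fin n, (1 : ℝ) ≤ ∑ s, I.SW v (I.shiftMatching s) := by
    rw [sum_SW_shiftMatching, sum_congr rfl fun i _ => hsum i]
  obtain ⟨s, -, hs⟩ := exists_le_of_sum_le univ_nonempty htotal
  exact ⟨_, isMatching_shiftMatching s, hs⟩

theorem exists_one_le_SW_of_eq_one {i h : Fin n} (hh : h ∈ I.accept i) (hv : v i h = 1) :
    ∃ M, I.IsMatching M ∧ 1 ≤ I.SW v M :=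
  ⟨_, isMatching_singleton hh, by rw [SW_singleton, hv]⟩

theorem IsMaxWeightMatching.weightSum_le_SW (hμ' : I.IsMaxWeightMatching w μ')
    (hwv : ∀ i h, h ∈ I.accept i → w (i, h) ≤ v i h) (hM : I.IsMatching M) :
    weightSum w M ≤ I.SW v μ' :=
  (hμ'.2 M hM).trans (sum_le_sum fun e he => hwv e.1 e.2 (hμ'.1.1 e he))

/-- The edges of `M` of value at least `T`; for `T = t_c` these are the ones whose rounded value
is not `0`. -/
noncomputable def heavyEdges (v : Fin n → Fin n → ℝ) (T : ℝ) (M : Finset (Fin n × Fin n)) :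
    Finset (Fin n × Fin n) :=
  {e ∈ M | T ≤ v e.1 e.2}

section HeavyEdges

variable {T : ℝ}

theorem heavyEdges_subset : heavyEdges v T M ⊆ M :=
  filter_subset _ _

theorem le_of_mem_heavyEdges {e : Fin n × Fin n} (he : e ∈ heavyEdges v T M) : T ≤ v e.1 e.2 :=
  (mem_filter.1 he).2

theorem IsMatching.SW_le_SW_heavyEdges_add (hM : I.IsMatching M) (hT : 0 ≤ T) :
    I.SW v M ≤ I.SW v (heavyEdges v T M) + (n - #(heavyEdges v T M)) * T := by
  have hlight : ∑ e ∈ M with ¬ T ≤ v e.1 e.2, v e.1 e.2 ≤ #{e ∈ M | ¬ T ≤ v e.1 e.2} * T := by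
    rw [← nsmul_eq_mul]
    exact sum_le_card_nsmul _ _ _ fun e he => (not_le.1 (mem_filter.1 he).2).le
  have hcard : (#{e ∈ M | ¬ T ≤ v e.1 e.2} : ℝ) ≤ n - #(heavyEdges v T M) := by
    rw [le_sub_iff_add_le']
    exact_mod_cast (card_filter_add_card_filter_not _).trans_le hM.card_le_s5
  calc I.SW v M = I.SW v (heavyEdges v T M) + ∑ e ∈ M with ¬ T ≤ v e.1 e.2, v e.1 e.2 :=
        (sum_filter_add_sum_filter_not M _ _).symm
    _ ≤ I.SW v (heavyEdges v T M) + (n - #(heavyEdges v T M)) * T := by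
        gcongr
        exact hlight.trans (mul_le_mul_of_nonneg_right hcard hT)

theorem IsMatching.heavyEdges_nonempty (hM : I.IsMatching M) (hne : M.Nonempty) (hT : 0 ≤ T)
    (h : n * T ≤ I.SW v M) : (heavyEdges v T M).Nonempty := by
  have hconst : ∑ _e ∈ M, T ≤ ∑ e ∈ M, v e.1 e.2 :=
    calc ∑ _e ∈ M, T = #M * T := by rw [sum_const, nsmul_eq_mul]
      _ ≤ n * T := mul_le_mul_of_nonneg_right (by exact_mod_cast hM.card_le_s5) hT
      _ ≤ I.SW v M := h
  obtain ⟨e, he, hTe⟩ := exists_le_of_sum_le hne hconst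
  exact ⟨e, mem_filter.2 ⟨he, hTe⟩⟩

theorem IsMaxWeightMatching.SW_heavyEdges_le (hμ' : I.IsMaxWeightMatching w μ')
    (hwv : ∀ i h, h ∈ I.accept i → w (i, h) ≤ v i h) {r : ℝ} (hr : 0 ≤ r)
    (hvw : ∀ i h, h ∈ I.accept i → T ≤ v i h → v i h ≤ r * w (i, h)) (hM : I.IsMatching M) :
    I.SW v (heavyEdges v T M) ≤ r * I.SW v μ' :=
  calc I.SW v (heavyEdges v T M) ≤ ∑ e ∈ heavyEdges v T M, r * w e :=
        sum_le_sum fun e he =>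
          hvw e.1 e.2 (hM.1 e (heavyEdges_subset he)) (le_of_mem_heavyEdges he)
    _ = r * weightSum w (heavyEdges v T M) := (mul_sum ..).symm
    _ ≤ r * I.SW v μ' :=
        mul_le_mul_of_nonneg_left (hμ'.weightSum_le_SW hwv (hM.subset heavyEdges_subset)) hr

end HeavyEdges

section Approximation

variable {ε : ℝ} {c : ℕ}

theorem SW_le_mul_SW_add_div (hε : 0 ≤ ε)
    (hv : ∀ i h, h ∈ I.accept i → v i h ∈ Set.Icc 0 1) (hc : (n : ℝ) ^ 2 * threshold ε c ≤ ε)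
    (hw : ∀ i h, h ∈ I.accept i → IsThresholdRounding (threshold ε) c (v i h) (w (i, h)))
    (hμ' : I.IsMaxWeightMatching w μ') (hM : I.IsMatching M)
    (hne : (heavyEdges v (threshold ε c) M).Nonempty) :
    I.SW v M ≤ (1 + ε / 2) * I.SW v μ' + ε / (4 * #(heavyEdges v (threshold ε c) M)) := by
  have hT := (threshold_pos hε c).le
  have hheavy : I.SW v (heavyEdges v (threshold ε c) M) ≤ (1 + ε / 2) * I.SW v μ' :=
    hμ'.SW_heavyEdges_le (fun i h hh => (hw i h hh).le (hv i h hh).1) (by positivity)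
      (fun i h hh => (hw i h hh).le_mul (fun k => (threshold_eq_mul_threshold_succ hε k).le)
        (threshold_zero (ε := ε) ▸ (hv i h hh).2)) hM
  have hlight := sub_mul_le_div_four_mul (Nat.cast_pos.2 hne.card_pos) hT hc
  exact (hM.SW_le_SW_heavyEdges_add hT).trans (add_le_add hheavy hlight)

theorem half_le_SW_of_mem (hε : 0 ≤ ε) (hε2 : ε ≤ 2) (hv : ∀ i h, h ∈ I.accept i → 0 ≤ v i h)
    (hw : ∀ i h, h ∈ I.accept i → IsThresholdRounding (threshold ε) c (v i h) (w (i, h)))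
    (hμ' : I.IsMaxWeightMatching w μ') {i h : Fin n} (hh : h ∈ I.accept i)
    (hc : threshold ε c ≤ v i h) (hval : 1 - ε / 4 ≤ v i h) : 1 / 2 ≤ I.SW v μ' :=
  calc 1 / 2 ≤ threshold ε 1 := half_le_threshold_one hε hε2
    _ ≤ w (i, h) := (hw i h hh).threshold_le (threshold_antitone hε) hc le_rfl
        ((threshold_one_le hε hε2).trans hval)
    _ = weightSum w {(i, h)} := (sum_singleton _ _).symm
    _ ≤ I.SW v μ' := hμ'.weightSum_le_SW (fun i h hh => (hw i h hh).le (hv i h hh))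
        (isMatching_singleton hh)

theorem one_div_two_mul_card_heavyEdges_le_SW (hε : 0 ≤ ε) (hε2 : ε ≤ 2)
    (hv : ∀ i h, h ∈ I.accept i → v i h ∈ Set.Icc 0 1) (hc : (n : ℝ) ^ 2 * threshold ε c ≤ ε)
    (hw : ∀ i h, h ∈ I.accept i → IsThresholdRounding (threshold ε) c (v i h) (w (i, h)))
    (hμ' : I.IsMaxWeightMatching w μ') (hM : I.IsMatching M) (hone : 1 ≤ I.SW v M)
    (hne : (heavyEdges v (threshold ε c) M).Nonempty) :
    1 / (2 * (#(heavyEdges v (threshold ε c) M) : ℝ)) ≤ I.SW v μ' := by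
  rcases (Nat.one_le_iff_ne_zero.2 hne.card_ne_zero).eq_or_lt with hcard | hcard
  · obtain ⟨⟨i, h⟩, hsingle⟩ := card_eq_one.1 hcard.symm
    have hmem : (i, h) ∈ heavyEdges v (threshold ε c) M := hsingle ▸ mem_singleton_self _
    have hT := (threshold_pos hε c).le
    have hlight := sub_mul_le_div_four_mul one_pos hT hc
    have hsplit := hM.SW_le_SW_heavyEdges_add (v := v) hT
    rw [hsingle, SW_singleton, card_singleton, Nat.cast_one] at hsplit
    rw [hsingle, card_singleton, Nat.cast_one, mul_one]
    exact half_le_SW_of_mem hε hε2 (fun i h hh => (hv i h hh).1) hw hμ'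
      (hM.1 _ (heavyEdges_subset hmem)) (le_of_mem_heavyEdges hmem) (by linarith)
  · exact one_div_two_mul_le_of_one_le (by exact_mod_cast hcard) hε hε2
      (hone.trans (SW_le_mul_SW_add_div hε hv hc hw hμ' hM hne))

theorem SW_le_of_one_le_SW (hε : 0 ≤ ε) (hε2 : ε ≤ 2)
    (hv : ∀ i h, h ∈ I.accept i → v i h ∈ Set.Icc 0 1) (hc : (n : ℝ) ^ 2 * threshold ε c ≤ ε)
    (hw : ∀ i h, h ∈ I.accept i → IsThresholdRounding (threshold ε) c (v i h) (w (i, h)))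
    (hμ' : I.IsMaxWeightMatching w μ') (hM : I.IsMatching M) (hone : 1 ≤ I.SW v M) :
    I.SW v M ≤ (1 + ε) * I.SW v μ' := by
  have hM_ne : M.Nonempty := by
    rw [nonempty_iff_ne_empty]
    rintro rfl
    exact absurd hone (by simp [SW])
  have hne : (heavyEdges v (threshold ε c) M).Nonempty :=
    hM.heavyEdges_nonempty hM_ne (threshold_pos hε c).le
      ((mul_threshold_le_one hε (hc.trans hε2)).trans hone)
  have hcard := one_div_two_mul_card_heavyEdges_le_SW hε hε2 hv hc hw hμ' hM hone hne
  calc I.SW v M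
      ≤ (1 + ε / 2) * I.SW v μ' + ε / (4 * #(heavyEdges v (threshold ε c) M)) :=
        SW_le_mul_SW_add_div hε hv hc hw hμ' hM hne
    _ = (1 + ε / 2) * I.SW v μ' + ε / 2 * (1 / (2 * #(heavyEdges v (threshold ε c) M))) := by
        ring
    _ ≤ (1 + ε / 2) * I.SW v μ' + ε / 2 * I.SW v μ' := by gcongr
    _ = (1 + ε) * I.SW v μ' := by ring

end Approximation

end OSMInstance

theorem adaptive_approx_paretoOptimal_general {n : ℕ} {I : OSMInstance n} {ε : ℝ} (hε : 0 < ε)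
    (hε2 : ε ≤ 2) {v : Fin n → Fin n → ℝ} (hv : ∀ i h, h ∈ I.accept i → v i h ∈ Set.Icc 0 1)
    (hvval : I.UnitSum v ∨ I.UnitRange v) {c : ℕ}
    (hc : Real.log ((n : ℝ) ^ 2 * (1 / ε)) / Real.log (1 + ε / 2) ≤ c)
    {w : Fin n × Fin n → ℝ}
    (hw : ∀ i h, h ∈ I.accept i → IsThresholdRounding (threshold ε) c (v i h) (w (i, h)))
    {μ' : Finset (Fin n × Fin n)} (hμ' : I.IsMaxWeightMatching w μ')
    {M : Finset (Fin n × Fin n)} (hM : I.IsMatching M) :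
    I.SW v M ≤ (1 + ε) * I.SW v μ' := by
  rcases n.eq_zero_or_pos with rfl | hn
  · simp [OSMInstance.SW, eq_empty_of_isEmpty]
  have happrox {M} (hM : I.IsMatching M) (hone : 1 ≤ I.SW v M) :
      I.SW v M ≤ (1 + ε) * I.SW v μ' :=
    OSMInstance.SW_le_of_one_le_SW hε.le hε2 hv (sq_mul_threshold_le hn hε hc) hw hμ' hM hone
  obtain ⟨M₁, hM₁, hone⟩ : ∃ M₁, I.IsMatching M₁ ∧ 1 ≤ I.SW v M₁ := by
    rcases hvval with hsum | hrange
    · exact OSMInstance.exists_one_le_SW_of_unitSum hn hsum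
    · obtain ⟨h, hh, hval⟩ := (hrange ⟨0, hn⟩).1
      exact OSMInstance.exists_one_le_SW_of_eq_one hh hval
  rcases le_total 1 (I.SW v M) with hM_one | hM_one
  · exact happrox hM hM_one
  · exact (hM_one.trans hone).trans (happrox hM₁ hone)

/-- every Pareto optimal matching whose welfare is at least that of the
maximum-weight matching under the rounded weights is a `(1+ε)`-approximation to the
optimal welfare among Pareto optimal matchings. -/
theorem adaptive_approx_paretoOptimal {n : ℕ} (I : OSMInstance n)
    (ε : ℝ) (hε : 0 < ε) (hε2 : ε ≤ 2)
    (v : Fin n → Fin n → ℝ) (hv : I.Consistent v)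
    (hvval : I.UnitSum v ∨ I.UnitRange v)
    (c : ℕ) (hc : c = ⌈Real.log ((n : ℝ) ^ 2 * (1 / ε)) / Real.log (1 + ε / 2)⌉₊)
    (t : ℕ → ℝ) (ht : ∀ k, t k = (2 / (2 + ε)) ^ k)
    (val' : Fin n × Fin n → ℝ)
    (hval' : ∀ i h, h ∈ I.accept i →
      (∃ k, 1 ≤ k ∧ k ≤ c ∧ t k ≤ v i h ∧ (k = 1 ∨ v i h < t (k - 1)) ∧
        val' (i, h) = t k) ∨
      (v i h < t c ∧ val' (i, h) = 0))
    (μ' : Finset (Fin n × Fin n)) (hμ' : I.IsMaxWeightMatching (fun e => val' e) μ')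
    (μ : Finset (Fin n × Fin n)) (hμ : I.ParetoOptimal μ)
    (hge : I.SW v μ' ≤ I.SW v μ)
    (μstar : Finset (Fin n × Fin n)) (hstar : I.ParetoOptimal μstar)
    (hstaropt : ∀ μ'', I.ParetoOptimal μ'' → I.SW v μ'' ≤ I.SW v μstar) :
    I.SW v μstar ≤ (1 + ε) * I.SW v μ := by
  obtain rfl : t = threshold ε := funext ht
  exact (adaptive_approx_paretoOptimal_general hε hε2 (fun i h _ => hv.1 i h) hvval
    (hc ▸ Nat.le_ceil _) hval' hμ' hstar.1).trans (by gcongr)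
end

section
/- Let I be an instance with n agents and n objects and let v be a unit-sum valuation profile consistent with I. Set t_1 = 1/n^{1/3} and t_i = 1/(min{i, n^{1/3}}·n^{2/3}) for 2 ≤ i ≤ n. Let μ_MM be obtained from a maximum-weight matching of G_I under the weights assigning to each edge e = (a_i, h_j) of rank r the weight t_r if v_i(h_j) ≥ t_r and 0 otherwise, by deleting all edges of weight 0. Then for every matching μ* of G_I, letting H = {(a_i, h_j) ∈ μ* : v_i(h_j) ≥ t_r where r is the rank of (a_i, h_j)}, it holds that Σ_{(a_i,h_j) ∈ H} v_i(h_j) ≤ n^{2/3}·SW(μ_MM | v). -/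
open Finset
open scoped Classical

/-!
An acceptable edge of rank `r` has value at most `1 / r`, because the `r - 1` preferred objects and
the object itself are each worth at least as much and their values sum to at most `1`. So if
`1 ≤ c * (r * t r)`, the value of an edge of rank `r` is at most `c * t r`; for the thresholds of
the theorem and `c = n^(2/3)`, the product `c * (r * t r)` is `n^(1/3)` if `r = 1` and
`r / min r (n^(1/3))` otherwise. The high-value part of `μ*` is again a matching, all of whose edges
carry their threshold as weight; maximality bounds its weight by that of the maximum-weight
matching, and no weight exceeds the value of its edge.
-/

section ThresholdWeight

variable {α R : Type*}

/-- The threshold weight: an element whose value `x a` reaches its threshold `t a` is charged that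
threshold, and any other element is charged nothing. -/
def thresholdWeight [Zero R] [LE R] [DecidableLE R] (t x : α → R) (a : α) : R :=
  if t a ≤ x a then t a else 0

theorem thresholdWeight_of_le [Zero R] [LE R] [DecidableLE R] {t x : α → R} {a : α}
    (h : t a ≤ x a) : thresholdWeight t x a = t a :=
  if_pos h

theorem thresholdWeight_le [Zero R] [LE R] [DecidableLE R] {t x : α → R} {a : α}
    (hx : 0 ≤ x a) : thresholdWeight t x a ≤ x a := by
  unfold thresholdWeight
  split_ifs with h
  exacts [h, hx]

variable [Semiring R] [PartialOrder R] [IsOrderedRing R] [DecidableLE R] {t x : α → R}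
  {s s₀ : Finset α} {c : R}

theorem sum_highValue_le_mul_sum_thresholdWeight (h : ∀ a ∈ s, x a ≤ c * t a) :
    ∑ a ∈ s with t a ≤ x a, x a ≤ c * ∑ a ∈ s with t a ≤ x a, thresholdWeight t x a := by
  rw [mul_sum]
  refine sum_le_sum fun a ha => ?_
  obtain ⟨has, hta⟩ := mem_filter.1 ha
  rw [thresholdWeight_of_le hta]
  exact h a has

theorem sum_thresholdWeight_le_sum_ne_zero [DecidableEq R] (hx : ∀ a ∈ s, 0 ≤ x a) :
    ∑ a ∈ s, thresholdWeight t x a ≤ ∑ a ∈ s with thresholdWeight t x a ≠ 0, x a := by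
  rw [← sum_filter_ne_zero]
  exact sum_le_sum fun a ha => thresholdWeight_le (hx a (mem_of_mem_filter a ha))

theorem sum_highValue_le_mul_of_isMaxOn [DecidableEq R] {F : Set (Finset α)}
    (hF : IsLowerSet F) (hmax : IsMaxOn (fun s => ∑ a ∈ s, thresholdWeight t x a) F s₀)
    (hs : s ∈ F) (hx : ∀ a ∈ s₀, 0 ≤ x a) (hc : 0 ≤ c) (h : ∀ a ∈ s, x a ≤ c * t a) :
    ∑ a ∈ s with t a ≤ x a, x a ≤ c * ∑ a ∈ s₀ with thresholdWeight t x a ≠ 0, x a :=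
  calc ∑ a ∈ s with t a ≤ x a, x a
      ≤ c * ∑ a ∈ s with t a ≤ x a, thresholdWeight t x a :=
        sum_highValue_le_mul_sum_thresholdWeight h
    _ ≤ c * ∑ a ∈ s₀, thresholdWeight t x a :=
        mul_le_mul_of_nonneg_left (hmax (hF (filter_subset _ s) hs)) hc
    _ ≤ c * ∑ a ∈ s₀ with thresholdWeight t x a ≠ 0, x a :=
        mul_le_mul_of_nonneg_left (sum_thresholdWeight_le_sum_ne_zero hx) hc

end ThresholdWeight

namespace OSMInstance

variable {n : ℕ}

theorem isLowerSet_isMatching (I : OSMInstance n) : IsLowerSet {μ | I.IsMatching μ} :=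
  fun _ _ hsub hμ => ⟨fun e he => hμ.1 e (hsub he),
    fun e he e' he' => hμ.2.1 e (hsub he) e' (hsub he'),
    fun e he e' he' => hμ.2.2 e (hsub he) e' (hsub he')⟩

theorem one_le_edgeRank (I : OSMInstance n) (e : Fin n × Fin n) : 1 ≤ I.edgeRank e :=
  Nat.le_add_left 1 _

theorem card_insert_strictPref (I : OSMInstance n) (e : Fin n × Fin n) :
    #(insert e.2 {h ∈ I.accept e.1 | I.strictPref e.1 h e.2}) = I.edgeRank e :=
  card_insert_of_notMem fun h => (mem_filter.1 h).2.2 (mem_filter.1 h).2.1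

theorem edgeRank_le (I : OSMInstance n) (e : Fin n × Fin n) : I.edgeRank e ≤ n := by
  rw [← I.card_insert_strictPref e]
  exact card_finset_fin_le _

theorem edgeRank_nsmul_le_sum {M : Type*} [AddCommMonoid M] [PartialOrder M]
    [IsOrderedAddMonoid M] {I : OSMInstance n} {e : Fin n × Fin n} (he : e.2 ∈ I.accept e.1)
    {f : Fin n → M} (hf : ∀ h ∈ I.accept e.1, 0 ≤ f h)
    (hmono : ∀ h ∈ I.accept e.1, I.pref e.1 h e.2 → f e.2 ≤ f h) :
    I.edgeRank e • f e.2 ≤ ∑ h ∈ I.accept e.1, f h := by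
  rw [← I.card_insert_strictPref e]
  calc #(insert e.2 {h ∈ I.accept e.1 | I.strictPref e.1 h e.2}) • f e.2
      ≤ ∑ h ∈ insert e.2 {h ∈ I.accept e.1 | I.strictPref e.1 h e.2}, f h := by
        refine card_nsmul_le_sum _ _ _ <| forall_mem_insert _ _ _ |>.2 ⟨le_rfl, fun h hh => ?_⟩
        obtain ⟨hacc, hpref, -⟩ := mem_filter.1 hh
        exact hmono h hacc hpref
    _ ≤ ∑ h ∈ I.accept e.1, f h :=
        sum_le_sum_of_subset_of_nonneg (insert_subset he (filter_subset _ _))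
          fun h hacc _ => hf h hacc

theorem value_le_mul_threshold {K : Type*} [CommSemiring K] [LinearOrder K]
    [IsStrictOrderedRing K] {I : OSMInstance n} {e : Fin n × Fin n} (he : e.2 ∈ I.accept e.1)
    {f : Fin n → K} (hf : ∀ h ∈ I.accept e.1, 0 ≤ f h)
    (hmono : ∀ h ∈ I.accept e.1, I.pref e.1 h e.2 → f e.2 ≤ f h)
    (hsum : ∑ h ∈ I.accept e.1, f h ≤ 1) {c t : K} (ht : 1 ≤ c * (I.edgeRank e * t)) :
    f e.2 ≤ c * t := by
  have hrank : (0 : K) < I.edgeRank e := Nat.cast_pos.2 (I.one_le_edgeRank e)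
  refine le_of_mul_le_mul_left ?_ hrank
  calc (I.edgeRank e : K) * f e.2
      ≤ ∑ h ∈ I.accept e.1, f h := by
        rw [← nsmul_eq_mul]
        exact edgeRank_nsmul_le_sum he hf hmono
    _ ≤ c * (I.edgeRank e * t) := hsum.trans ht
    _ = I.edgeRank e * (c * t) := mul_left_comm _ _ _

end OSMInstance

theorem one_le_rpow_mul_threshold {n : ℕ} {a b : ℝ} (hab : a ≤ b) {t : ℕ → ℝ}
    (ht1 : t 1 = 1 / (n : ℝ) ^ a)
    (ht : ∀ i, 2 ≤ i → i ≤ n → t i = 1 / (min (i : ℝ) ((n : ℝ) ^ a) * (n : ℝ) ^ b))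
    {r : ℕ} (hr : 1 ≤ r) (hrn : r ≤ n) : 1 ≤ (n : ℝ) ^ b * (r * t r) := by
  have hn : (1 : ℝ) ≤ n := by exact_mod_cast hr.trans hrn
  have hna : 0 < (n : ℝ) ^ a := by positivity
  rcases hr.eq_or_lt with rfl | hr2
  · rw [ht1, Nat.cast_one, one_mul, mul_one_div, one_le_div hna]
    exact Real.rpow_le_rpow_of_exponent_le hn hab
  · have hmin : 0 < min (r : ℝ) ((n : ℝ) ^ a) := lt_min (by positivity) hna
    calc 1 ≤ r / min (r : ℝ) ((n : ℝ) ^ a) := (one_le_div hmin).2 (min_le_left _ _)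
      _ = (n : ℝ) ^ b * (r * t r) := by
        rw [ht r hr2 hrn]
        field_simp

theorem highValue_bound_PO_general {n : ℕ} (I : OSMInstance n) (v : Fin n → Fin n → ℝ)
    (hnonneg : ∀ i, ∀ h ∈ I.accept i, 0 ≤ v i h)
    (hmono : ∀ i, ∀ h ∈ I.accept i, ∀ h' ∈ I.accept i, I.pref i h h' → v i h' ≤ v i h)
    (hsum : ∀ i, ∑ h ∈ I.accept i, v i h ≤ 1)
    (t : ℕ → ℝ) {c : ℝ} (hc : 0 ≤ c) (ht : ∀ r : ℕ, 1 ≤ r → r ≤ n → 1 ≤ c * (r * t r))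
    (w : Fin n × Fin n → ℝ)
    (hw : ∀ e, w e = if t (I.edgeRank e) ≤ v e.1 e.2 then t (I.edgeRank e) else 0)
    (μ₀ : Finset (Fin n × Fin n)) (hμ₀ : I.IsMaxWeightMatching w μ₀)
    (μMM : Finset (Fin n × Fin n)) (hμMM : μMM = μ₀.filter (fun e => w e ≠ 0))
    (μstar : Finset (Fin n × Fin n)) (hstar : I.IsMatching μstar) :
    ∑ e ∈ μstar.filter (fun e => t (I.edgeRank e) ≤ v e.1 e.2), v e.1 e.2 ≤ c * I.SW v μMM := by
  obtain rfl : w = thresholdWeight (fun e => t (I.edgeRank e)) (fun e => v e.1 e.2) := funext hw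
  subst hμMM
  refine sum_highValue_le_mul_of_isMaxOn I.isLowerSet_isMatching hμ₀.2 hstar
    (fun e he => hnonneg e.1 e.2 (hμ₀.1.1 e he)) hc fun e he => ?_
  have hacc : e.2 ∈ I.accept e.1 := hstar.1 e he
  exact OSMInstance.value_le_mul_threshold hacc (hnonneg e.1)
    (fun h hh => hmono e.1 h hh e.2 hacc) (hsum e.1)
    (ht _ (I.one_le_edgeRank e) (I.edgeRank_le e))

/-- the high-value part of any matching has welfare at most
`n^(2/3)` times the welfare of the (filtered) maximum-weight matching under the
non-adaptive threshold weights, for unit-sum valuations. -/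
theorem highValue_bound_PO {n : ℕ} (I : OSMInstance n)
    (v : Fin n → Fin n → ℝ) (hv : I.Consistent v) (hus : I.UnitSum v)
    (t : ℕ → ℝ) (ht1 : t 1 = 1 / (n : ℝ) ^ ((1 : ℝ) / 3))
    (ht : ∀ i, 2 ≤ i → i ≤ n →
      t i = 1 / (min (i : ℝ) ((n : ℝ) ^ ((1 : ℝ) / 3)) * (n : ℝ) ^ ((2 : ℝ) / 3)))
    (w : Fin n × Fin n → ℝ)
    (hw : ∀ e, w e = if t (I.edgeRank e) ≤ v e.1 e.2 then t (I.edgeRank e) else 0)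
    (μ₀ : Finset (Fin n × Fin n)) (hμ₀ : I.IsMaxWeightMatching w μ₀)
    (μMM : Finset (Fin n × Fin n)) (hμMM : μMM = μ₀.filter (fun e => w e ≠ 0))
    (μstar : Finset (Fin n × Fin n)) (hstar : I.IsMatching μstar) :
    ∑ e ∈ μstar.filter (fun e => t (I.edgeRank e) ≤ v e.1 e.2), v e.1 e.2 ≤
      (n : ℝ) ^ ((2 : ℝ) / 3) * I.SW v μMM :=
  highValue_bound_PO_general I v (fun i h _ => (hv.1 i h).1)
    (fun i h hh h' hh' => (hv.2.2 i h h' hh hh').1) (fun i => (hus i).le) t (by positivity)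
    (fun r => one_le_rpow_mul_threshold (by norm_num) ht1 ht) w hw μ₀ hμ₀ μMM hμMM μstar hstar
end
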